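/- Let n ≥ 1 and let T be the theory of n-subhomogeneous C*-algebras. Then the minimal tensor norm predicate P^min is T-definable; that is, for all families (A_i)_{i∈I} of n-subhomogeneous C*-algebras, all ultrafilters U on I, and all m ≥ 1, P^min_{∏_U A_i, m} = lim_U P^min_{A_i, m}. -/

import Mathlib

/-!
The minimal tensor norm of a subhomogeneous algebra is computed by matrix representations, and
this description is uniform enough to survive ultraproducts and to be approximated by formulas.

**Matrix representations.** If `A` is `n`-subhomogeneous, every `a : A` attains its norm in the
GNS representation of a pure state whose value at `a* a` is `‖a‖²`; this representation is
irreducible, hence is given by `n × n` matrices (`IsSubhomogeneous.hasReps`). The vector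
functionals `φ` of such a representation are excisable: `x * a * y ≈ φ a • h` on any finite set
of `a`, with `x`, `y` bounded and `‖h‖ = 1`. Excision bounds slice maps for every C*-norm, so a pair `ρ`, `σ` of
excisable representations gives a representation `ρ ⊗ σ` of `A ⊗ A` whose coefficients are bounded
with respect to every C*-norm; the C*-identity improves this to contractivity. Hence the
minimal C*-norm is the supremum `repNorm` of the norms in the representations `ρ ⊗ σ`
(`HasReps.minNorm_eq`). Excisability rather than irreducibility is used because it passes
directly to ultraproducts (`IsCStarUltraproduct.hasReps`), where representations are limits
of matrix representations.

**Definability.** Let `x = ∑ aₖ ⊗ bₖ`. The element obtained from `x` by iterating `x ↦ x* x` is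
`∑ tⱼ ⊗ sⱼ` for terms `tⱼ`, `sⱼ` not depending on the algebra. If the norms of finitely many linear
combinations of the `tⱼ` and of the `sⱼ` almost agree in two algebras, then, slicing first in one
and then in the other factor, the norms of `∑ tⱼ ⊗ sⱼ` agree up to a factor `n ^ 8` and a small
error (`repNorm_le_of_combinations`). Since `x ↦ x* x` squares the norm, extracting a high root
makes the factor negligible (`exists_terms_repNorm`). So the norm of `x` is, up to `ε`, a
continuous function of the norms of finitely many terms (`exists_repNorm_approx`). Such functions
are quantifier-free formulas and commute with ultraproducts, which gives both claims.
-/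

open scoped TensorProduct
open Filter Topology Function

noncomputable section

/-- The star operation on the algebraic tensor product `A ⊗[ℂ] B` of two complex
C*-algebras, determined by `star (a ⊗ b) = star a ⊗ star b`. -/
def tensorStar (A B : Type) [CStarAlgebra A] [CStarAlgebra B] :
    A ⊗[ℂ] B →+ A ⊗[ℂ] B :=
  TensorProduct.liftAddHom
    { toFun := fun a =>
        { toFun := fun b => star a ⊗ₜ[ℂ] star b
          map_zero' := by simp
          map_add' := fun b b' => by simp [star_add, TensorProduct.tmul_add] }
      map_zero' := by ext b; simp
      map_add' := fun a a' => by ext b; simp [star_add, TensorProduct.add_tmul] }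
    (fun c a b => by
      simp [star_smul, TensorProduct.smul_tmul, TensorProduct.tmul_smul])

/-- A C*-norm on the algebraic tensor product `A ⊗[ℂ] B`: a submultiplicative,
star-invariant norm satisfying the C*-identity (so that the completion with respect to it
is a C*-algebra). -/
structure IsCStarNorm {A B : Type} [CStarAlgebra A] [CStarAlgebra B]
    (nu : A ⊗[ℂ] B → ℝ) : Prop where
  eq_zero_iff : ∀ x, nu x = 0 ↔ x = 0
  nonneg : ∀ x, 0 ≤ nu x
  add_le : ∀ x y, nu (x + y) ≤ nu x + nu y
  smul_eq : ∀ (c : ℂ) x, nu (c • x) = ‖c‖ * nu x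
  mul_le : ∀ x y, nu (x * y) ≤ nu x * nu y
  star_eq : ∀ x, nu (tensorStar A B x) = nu x
  cstar : ∀ x, nu (tensorStar A B x * x) = nu x ^ 2

/-- The minimal tensor norm on `A ⊗[ℂ] B`: by Takesaki's theorem, the minimal C*-norm
on the algebraic tensor product. -/
def minNorm (A B : Type) [CStarAlgebra A] [CStarAlgebra B] (x : A ⊗[ℂ] B) : ℝ :=
  sInf {r : ℝ | ∃ nu : A ⊗[ℂ] B → ℝ, IsCStarNorm nu ∧ r = nu x}

/-- A family of elements of C*-algebras is (uniformly norm-)bounded. -/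
def Bdd {I : Type} {A : I → Type} [∀ i, CStarAlgebra (A i)] (f : ∀ i, A i) : Prop :=
  ∃ M : ℝ, ∀ i, ‖f i‖ ≤ M

/-- `π : (∀ i, A i) → B` realizes `B` as the C*-algebra ultraproduct `∏_U A_i`, i.e. as
the quotient of the ℓ∞-product of the `A i` by the ideal of bounded families whose norms
tend to `0` along `U`:  `π` is a unital *-homomorphism on bounded families, every element
of `B` lifts to a bounded family (with control of norms), and the norm of `π f` is the
`U`-limit of the norms `‖f i‖`.  This data determines `B` uniquely up to isometric
*-isomorphism. -/
structure IsCStarUltraproduct {I : Type} (U : Ultrafilter I) (A : I → Type)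
    [∀ i, CStarAlgebra (A i)] (B : Type) [CStarAlgebra B]
    (π : (∀ i, A i) → B) : Prop where
  map_one : π 1 = 1
  map_add : ∀ f g, Bdd f → Bdd g → π (f + g) = π f + π g
  map_mul : ∀ f g, Bdd f → Bdd g → π (f * g) = π f * π g
  map_star : ∀ f, Bdd f → π (star f) = star (π f)
  map_smul : ∀ (c : ℂ) f, Bdd f → π (c • f) = c • π f
  norm_eq : ∀ f, Bdd f → Tendsto (fun i => ‖f i‖) (U : Filter I) (nhds ‖π f‖)
  surj : ∀ b : B, ∃ f, (∀ i, ‖f i‖ ≤ ‖b‖) ∧ π f = b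

/-- *-polynomial terms in `n` variables over `ℂ`: the terms of the continuous-logic
language of (unital) C*-algebras. -/
inductive CTerm : ℕ → Type
  | var {n : ℕ} : Fin n → CTerm n
  | one {n : ℕ} : CTerm n
  | add {n : ℕ} : CTerm n → CTerm n → CTerm n
  | mul {n : ℕ} : CTerm n → CTerm n → CTerm n
  | star {n : ℕ} : CTerm n → CTerm n
  | smul {n : ℕ} : ℂ → CTerm n → CTerm n

/-- Evaluation of a *-polynomial term in a C*-algebra. -/
def CTerm.eval {A : Type} [CStarAlgebra A] : ∀ {n : ℕ}, CTerm n → (Fin n → A) → A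
  | _, CTerm.var i, a => a i
  | _, CTerm.one, _ => 1
  | _, CTerm.add s t, a => CTerm.eval s a + CTerm.eval t a
  | _, CTerm.mul s t, a => CTerm.eval s a * CTerm.eval t a
  | _, CTerm.star t, a => Star.star (CTerm.eval t a)
  | _, CTerm.smul c t, a => c • CTerm.eval t a

/-- Formulas of the continuous-logic language of (unital) C*-algebras in `n` free
variables (all variables ranging over the closed unit ball): atomic formulas `‖t‖` for
*-polynomial terms `t`, closed under continuous combinations and the quantifiers
`sup` and `inf` over the unit ball. -/
inductive Formula : ℕ → Type
  | atom {n : ℕ} : CTerm n → Formula n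
  | comb {n k : ℕ} (u : (Fin k → ℝ) → ℝ) (hu : Continuous u)
      (phis : Fin k → Formula n) : Formula n
  | sup {n : ℕ} : Formula (n + 1) → Formula n
  | inf {n : ℕ} : Formula (n + 1) → Formula n

/-- The interpretation of a formula in a (unital) C*-algebra, the quantified variables
ranging over the closed unit ball. -/
def Formula.interp (A : Type) [CStarAlgebra A] :
    ∀ {n : ℕ}, Formula n → (Fin n → A) → ℝ
  | _, Formula.atom t, a => ‖t.eval a‖
  | _, Formula.comb u _ phis, a => u fun j => (phis j).interp A a
  | _, Formula.sup phi, a => ⨆ b : {x : A // ‖x‖ ≤ 1}, phi.interp A (Fin.snoc a b.1)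
  | _, Formula.inf phi, a => ⨅ b : {x : A // ‖x‖ ≤ 1}, phi.interp A (Fin.snoc a b.1)

/-- A sentence is a formula with no free variables. -/
abbrev Sentence := Formula 0

/-- A theory of (unital) C*-algebras: a set of sentences, each imposed as the condition
`σ = 0`. -/
abbrev CStarTheory := Set Sentence

/-- `A` is a model of the theory `T`. -/
def Models (A : Type) [CStarAlgebra A] (T : CStarTheory) : Prop :=
  ∀ σ ∈ T, σ.interp A finZeroElim = 0

/-- `A` is `n`-subhomogeneous: every (topologically) irreducible *-representation of `A`
on a complex Hilbert space has dimension at most `n`. -/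
def IsSubhomogeneous (n : ℕ) (A : Type) [CStarAlgebra A] : Prop :=
  ∀ (H : Type) [NormedAddCommGroup H] [InnerProductSpace ℂ H] [CompleteSpace H]
    (π : A →⋆ₐ[ℂ] (H →L[ℂ] H)),
    (∀ K : Submodule ℂ H, IsClosed (K : Set H) →
      (∀ a : A, ∀ x ∈ K, π a x ∈ K) → K = ⊥ ∨ K = ⊤) →
    FiniteDimensional ℂ H ∧ Module.finrank ℂ H ≤ n

/-! ### Every C*-norm on a tensor product is a cross norm -/

/-- A seminorm on a C*-algebra satisfying the C*-identity is dominated by the norm: it is at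
most `1` on unitaries, and a self-adjoint contraction is the average of a unitary and its
adjoint. -/
lemma cstarSeminorm_le_norm {A : Type} [CStarAlgebra A] (p : A → ℝ)
    (hadd : ∀ x y, p (x + y) ≤ p x + p y)
    (hsmul : ∀ (c : ℂ) x, p (c • x) = ‖c‖ * p x) (hstar : ∀ x, p (star x) = p x)
    (hcs : ∀ x, p (star x * x) = p x ^ 2) (h0 : ∀ x, 0 ≤ p x) (a : A) : p a ≤ ‖a‖ := by
  let := CStarAlgebra.spectralOrder A
  have := CStarAlgebra.spectralOrderedRing A
  have h1 : p 1 ≤ 1 := by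
    have := hcs 1
    rw [star_one, one_mul] at this
    nlinarith [h0 1]
  have hu : ∀ u ∈ unitary A, p u ≤ 1 := by
    intro u hu
    have := hcs u
    rw [Unitary.star_mul_self_of_mem hu] at this
    nlinarith [h0 u]
  have hsa1 : ∀ x : A, IsSelfAdjoint x → ‖x‖ ≤ 1 → p x ≤ 1 := by
    intro x hx hx1
    have hU := IsSelfAdjoint.self_add_I_smul_cfcSqrt_sub_sq_mem_unitary x hx hx1
    set u := x + Complex.I • CFC.sqrt (1 - x ^ 2) with hu_def
    have hsq : IsSelfAdjoint (CFC.sqrt (1 - x ^ 2)) := (CFC.sqrt_nonneg _).isSelfAdjoint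
    have hx2 : x = (1 / 2 : ℂ) • (u + star u) := by
      rw [hu_def, star_add, star_smul, hx.star_eq, hsq.star_eq]
      simp only [Complex.star_def, Complex.conj_I]
      module
    rw [hx2, hsmul]
    have := hadd u (star u)
    have h2 := hu u hU
    rw [hstar] at this
    norm_num
    linarith
  have hsa : ∀ x : A, IsSelfAdjoint x → p x ≤ ‖x‖ := by
    intro x hx
    rcases eq_or_ne x 0 with rfl | hne
    · have := hsmul 0 0
      simp at this
      simp [this]
    have hn : 0 < ‖x‖ := norm_pos_iff.mpr hne
    have h2 := hsa1 ((‖x‖⁻¹ : ℂ) • x) ?_ ?_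
    · rw [hsmul] at h2
      simp only [norm_inv, Complex.norm_real, norm_norm] at h2
      rwa [inv_mul_le_iff₀ hn, mul_one] at h2
    · rw [IsSelfAdjoint, star_smul, hx.star_eq]
      simp
    · rw [norm_smul]
      simp [hn.ne']
  have h3 := hsa (star a * a) (.star_mul_self a)
  rw [hcs, CStarRing.norm_star_mul_self, ← sq] at h3
  exact (pow_le_pow_iff_left₀ (h0 a) (norm_nonneg a) two_ne_zero).1 h3

section CrossNorm
variable {A B : Type} [CStarAlgebra A] [CStarAlgebra B]

@[simp] lemma tensorStar_tmul (a : A) (b : B) :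
    tensorStar A B (a ⊗ₜ[ℂ] b) = star a ⊗ₜ[ℂ] star b := rfl

lemma tmul_ne_zero_of_ne {a : A} {b : B} (ha : a ≠ 0) (hb : b ≠ 0) : a ⊗ₜ[ℂ] b ≠ 0 := by
  intro h
  obtain ⟨f, hf⟩ : ∃ f : Module.Dual ℂ A, f a ≠ 0 := by
    by_contra! hcon
    exact ha ((Module.forall_dual_apply_eq_zero_iff ℂ a).1 hcon)
  have := congrArg ((TensorProduct.lid ℂ B).toLinearMap ∘ₗ LinearMap.rTensor B f) h
  simp [hf, hb] at this

variable {nu : A ⊗[ℂ] B → ℝ}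

lemma IsCStarNorm.tmul_le (hnu : IsCStarNorm nu) (a : A) (b : B) :
    nu (a ⊗ₜ[ℂ] b) ≤ ‖a‖ * ‖b‖ := by
  have h1 : nu (a ⊗ₜ[ℂ] 1) ≤ ‖a‖ := by
    refine cstarSeminorm_le_norm (fun x => nu (x ⊗ₜ[ℂ] 1)) ?_ ?_ ?_ ?_ ?_ a
    · intro x y
      simpa only [TensorProduct.add_tmul] using hnu.add_le _ _
    · intro c x
      simpa only [TensorProduct.smul_tmul'] using hnu.smul_eq c (x ⊗ₜ[ℂ] 1)
    · intro x
      simpa using hnu.star_eq (x ⊗ₜ[ℂ] 1)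
    · intro x
      simpa using hnu.cstar (x ⊗ₜ[ℂ] 1)
    · intro x
      exact hnu.nonneg _
  have h2 : nu (1 ⊗ₜ[ℂ] b) ≤ ‖b‖ := by
    refine cstarSeminorm_le_norm (fun x => nu (1 ⊗ₜ[ℂ] x)) ?_ ?_ ?_ ?_ ?_ b
    · intro x y
      simpa only [TensorProduct.tmul_add] using hnu.add_le _ _
    · intro c x
      simpa only [TensorProduct.tmul_smul] using hnu.smul_eq c (1 ⊗ₜ[ℂ] x)
    · intro x
      simpa using hnu.star_eq (1 ⊗ₜ[ℂ] x)
    · intro x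
      simpa using hnu.cstar (1 ⊗ₜ[ℂ] x)
    · intro x
      exact hnu.nonneg _
  have h3 := hnu.mul_le (a ⊗ₜ[ℂ] 1) (1 ⊗ₜ[ℂ] b)
  simp only [Algebra.TensorProduct.tmul_mul_tmul, mul_one, one_mul] at h3
  exact h3.trans (mul_le_mul h1 h2 (hnu.nonneg _) (norm_nonneg _))

/-- A positive element `a` of norm one has a nonzero spectral piece `c`, supported where
`a > r`, which is divisible by every power `a ^ k` with quotient of norm at most `r⁻¹ ^ k`. -/
lemma exists_spectral_piece (a : A) [PartialOrder A] [StarOrderedRing A] (ha : 0 ≤ a)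
    (ha1 : ‖a‖ = 1) (r : ℝ) (hr0 : 0 < r) (hr1 : r < 1) :
    ∃ c : A, c ≠ 0 ∧ ∀ k : ℕ, ∃ g : A, c = a ^ k * g ∧ ‖g‖ ≤ r⁻¹ ^ k := by
  have hnt : Nontrivial A := by
    refine ⟨a, 0, ?_⟩
    rintro rfl
    simp at ha1
  have hspec : ∀ x ∈ spectrum ℝ a, 0 ≤ x ∧ x ≤ 1 := by
    intro x hx
    refine ⟨spectrum_nonneg_of_nonneg ha hx, ?_⟩
    have := spectrum.norm_le_norm_of_mem hx
    rw [ha1] at this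
    exact (le_abs_self x).trans this
  have hmem : (1 : ℝ) ∈ spectrum ℝ a := ha1 ▸ CStarAlgebra.norm_mem_spectrum_of_nonneg ha
  have hsa : IsSelfAdjoint a := ha.isSelfAdjoint
  refine ⟨cfc (fun t : ℝ => max (t - r) 0) a, ?_, ?_⟩
  · intro h0
    have := norm_apply_le_norm_cfc (fun t : ℝ => max (t - r) 0) a hmem
      (by fun_prop) hsa
    rw [h0, norm_zero] at this
    have h2 : max (1 - r) 0 = 0 := norm_le_zero_iff.1 this
    have := le_max_left (1 - r) 0
    linarith
  · intro k
    have hpos : ∀ t : ℝ, 0 < max t r := fun t => lt_max_of_lt_right hr0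
    have hcont : Continuous (fun t : ℝ => max (t - r) 0 / (max t r) ^ k) :=
      Continuous.div (by fun_prop) (by fun_prop) (fun t => (pow_pos (hpos t) k).ne')
    refine ⟨cfc (fun t : ℝ => max (t - r) 0 / (max t r) ^ k) a, ?_, ?_⟩
    · have e1 : a ^ k = cfc (fun t : ℝ => t ^ k) a := (cfc_pow_id a k).symm
      rw [e1, ← cfc_mul _ _ a (by fun_prop) hcont.continuousOn]
      congr 1
      funext t
      rcases le_total t r with h | h
      · rw [max_eq_right (by linarith : t - r ≤ 0)]
        simp
      · rw [max_eq_left h]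
        have : t ^ k ≠ 0 := (pow_pos (hr0.trans_le h) k).ne'
        field_simp
    · refine norm_cfc_le (by positivity) fun t ht => ?_
      obtain ⟨h0, h1⟩ := hspec t ht
      have hb : 0 ≤ max (t - r) 0 := le_max_right _ _
      have hb1 : max (t - r) 0 ≤ 1 := max_le (by linarith) zero_le_one
      rw [Real.norm_of_nonneg (div_nonneg hb (pow_nonneg (hpos t).le k)), inv_pow, ← one_div]
      exact div_le_div₀ zero_le_one hb1 (pow_pos hr0 k)
        (pow_le_pow_left₀ hr0.le (le_max_right _ _) k)

lemma tmul_pow' (a : A) (b : B) (k : ℕ) : (a ⊗ₜ[ℂ] b) ^ k = (a ^ k) ⊗ₜ[ℂ] (b ^ k) :=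
  Algebra.TensorProduct.tmul_pow a b k

lemma IsCStarNorm.pow_mul_le (hnu : IsCStarNorm nu) (x y : A ⊗[ℂ] B) (k : ℕ) :
    nu (x ^ k * y) ≤ nu x ^ k * nu y := by
  induction k with
  | zero => simp
  | succ k ih =>
    rw [pow_succ', mul_assoc, pow_succ', mul_assoc]
    exact (hnu.mul_le _ _).trans (mul_le_mul_of_nonneg_left ih (hnu.nonneg _))

/-- If a C*-norm were smaller than the cross norm on a positive elementary tensor, then a
nonzero elementary tensor of spectral pieces would have arbitrarily small norm. -/
lemma IsCStarNorm.one_le_tmul_of_nonneg [PartialOrder A] [StarOrderedRing A]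
    [PartialOrder B] [StarOrderedRing B] (hnu : IsCStarNorm nu) {a : A} {b : B}
    (ha : 0 ≤ a) (hb : 0 ≤ b) (ha1 : ‖a‖ = 1) (hb1 : ‖b‖ = 1) :
    1 ≤ nu (a ⊗ₜ[ℂ] b) := by
  by_contra! hlt
  set q := nu (a ⊗ₜ[ℂ] b) with hq
  have hq0 : 0 ≤ q := hnu.nonneg _
  -- any `r` with `q < r ^ 2 < 1` works
  obtain ⟨r, hr0, hr1, hqr⟩ : ∃ r : ℝ, 0 < r ∧ r < 1 ∧ q < r * r := by
    refine ⟨(1 + q) / 2, by linarith, by linarith, ?_⟩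
    nlinarith [sq_nonneg (1 - q), mul_pos (sub_pos.2 hlt) (sub_pos.2 hlt)]
  obtain ⟨c, hc, hck⟩ := exists_spectral_piece a ha ha1 r hr0 hr1
  obtain ⟨d, hd, hdk⟩ := exists_spectral_piece b hb hb1 r hr0 hr1
  have hle : ∀ k : ℕ, nu (c ⊗ₜ[ℂ] d) ≤ (q / (r * r)) ^ k := by
    intro k
    obtain ⟨g, hg, hg1⟩ := hck k
    obtain ⟨g', hg', hg1'⟩ := hdk k
    have e : c ⊗ₜ[ℂ] d = (a ⊗ₜ[ℂ] b) ^ k * (g ⊗ₜ[ℂ] g') := by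
      rw [tmul_pow', Algebra.TensorProduct.tmul_mul_tmul, ← hg, ← hg']
    rw [e]
    refine (hnu.pow_mul_le _ _ k).trans ?_
    have h1 := (hnu.tmul_le g g').trans
      (mul_le_mul hg1 hg1' (norm_nonneg _) (by positivity))
    refine (mul_le_mul_of_nonneg_left h1 (by positivity)).trans (le_of_eq ?_)
    rw [← hq, div_pow, mul_pow, inv_pow]
    field_simp
  have hlim : Tendsto (fun k : ℕ => (q / (r * r)) ^ k) atTop (𝓝 0) :=
    tendsto_pow_atTop_nhds_zero_of_lt_one (by positivity) ((div_lt_one (by positivity)).2 hqr)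
  have h0 : nu (c ⊗ₜ[ℂ] d) ≤ 0 := ge_of_tendsto' hlim hle
  exact tmul_ne_zero_of_ne hc hd ((hnu.eq_zero_iff _).1 (le_antisymm h0 (hnu.nonneg _)))

/-- The lower half of the cross-norm property. -/
lemma IsCStarNorm.le_tmul (hnu : IsCStarNorm nu) (a : A) (b : B) :
    ‖a‖ * ‖b‖ ≤ nu (a ⊗ₜ[ℂ] b) := by
  let := CStarAlgebra.spectralOrder A
  have := CStarAlgebra.spectralOrderedRing A
  let := CStarAlgebra.spectralOrder B
  have := CStarAlgebra.spectralOrderedRing B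
  rcases eq_or_ne a 0 with rfl | ha
  · simpa using hnu.nonneg _
  rcases eq_or_ne b 0 with rfl | hb
  · simpa using hnu.nonneg _
  have hna : 0 < ‖a‖ := norm_pos_iff.mpr ha
  have hnb : 0 < ‖b‖ := norm_pos_iff.mpr hb
  set a' : A := (‖a‖⁻¹ : ℂ) • a with ha'
  set b' : B := (‖b‖⁻¹ : ℂ) • b with hb'
  have ha1 : ‖a'‖ = 1 := by rw [ha', norm_smul]; simp [hna.ne']
  have hb1 : ‖b'‖ = 1 := by rw [hb', norm_smul]; simp [hnb.ne']
  have h := hnu.one_le_tmul_of_nonneg (star_mul_self_nonneg a') (star_mul_self_nonneg b')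
    (by rw [CStarRing.norm_star_mul_self, ha1, one_mul])
    (by rw [CStarRing.norm_star_mul_self, hb1, one_mul])
  have h2 := hnu.cstar (a' ⊗ₜ[ℂ] b')
  rw [tensorStar_tmul, Algebra.TensorProduct.tmul_mul_tmul] at h2
  have h3 : 1 ≤ nu (a' ⊗ₜ[ℂ] b') := by
    rw [h2] at h
    nlinarith [hnu.nonneg (a' ⊗ₜ[ℂ] b')]
  have h4 : nu (a' ⊗ₜ[ℂ] b') = ‖a‖⁻¹ * (‖b‖⁻¹ * nu (a ⊗ₜ[ℂ] b)) := by
    rw [ha', hb', ← TensorProduct.smul_tmul', TensorProduct.tmul_smul, hnu.smul_eq, hnu.smul_eq]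
    simp
  rw [h4, ← mul_assoc, ← mul_inv] at h3
  rwa [le_inv_mul_iff₀ (by positivity), mul_one] at h3

end CrossNorm

open scoped Matrix.Norms.L2Operator

/-! ### Excisable functionals -/

/-- A functional `φ` on `A` is excisable with bound `M` if on every finite set it is
approximately of the form `x * a * y ≈ φ a • h` with `‖h‖ = 1` and `x`, `y` bounded by `M`.
(For a pure state one can take `M = 1`, `x = y ≥ 0` and `h = x * y`.) -/
def Excisable {A : Type} [CStarAlgebra A] (M : ℝ) (φ : A → ℂ) : Prop :=
  ∀ (F : Finset A) (ε : ℝ), 0 < ε → ∃ x y h : A, ‖x‖ ≤ M ∧ ‖y‖ ≤ M ∧ ‖h‖ = 1 ∧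
    ∀ a ∈ F, ‖x * a * y - φ a • h‖ ≤ ε

section Slice
variable {A B : Type} [CStarAlgebra A] [CStarAlgebra B]

/-- The slice map `φ ⊗ id : A ⊗ B → B` of a linear functional `φ` on `A`. -/
def slice (φ : A →ₗ[ℂ] ℂ) : A ⊗[ℂ] B →ₗ[ℂ] B :=
  (TensorProduct.lid ℂ B).toLinearMap ∘ₗ LinearMap.rTensor B φ

@[simp] lemma slice_tmul (φ : A →ₗ[ℂ] ℂ) (a : A) (b : B) :
    slice φ (a ⊗ₜ[ℂ] b) = φ a • b := by
  simp [slice]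

variable {nu : A ⊗[ℂ] B → ℝ}

lemma IsCStarNorm.sum_le (hnu : IsCStarNorm nu) {ι : Type*} (s : Finset ι)
    (f : ι → A ⊗[ℂ] B) : nu (∑ i ∈ s, f i) ≤ ∑ i ∈ s, nu (f i) := by
  classical
  induction s using Finset.induction_on with
  | empty => simp [(hnu.eq_zero_iff 0).2 rfl]
  | insert i s hi ih =>
    rw [Finset.sum_insert hi, Finset.sum_insert hi]
    exact (hnu.add_le _ _).trans (by gcongr)

/-- Slicing by an excisable functional is bounded for every C*-norm: up to a small error,
`h ⊗ (φ ⊗ id) w` is `(x ⊗ 1) * w * (y ⊗ 1)`, and its norm is `‖(φ ⊗ id) w‖`. -/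
lemma IsCStarNorm.slice_le (hnu : IsCStarNorm nu) {M : ℝ} {φ : A →ₗ[ℂ] ℂ}
    (hφ : Excisable M φ) (w : A ⊗[ℂ] B) : ‖slice φ w‖ ≤ M * M * nu w := by
  classical
  obtain ⟨S, rfl⟩ := TensorProduct.exists_finset w
  set w := ∑ i ∈ S, i.1 ⊗ₜ[ℂ] i.2 with hw
  set C := ∑ i ∈ S, ‖i.2‖ with hC
  have hC0 : 0 ≤ C := Finset.sum_nonneg fun i _ => norm_nonneg _
  have key : ∀ ε : ℝ, 0 < ε → ‖slice φ w‖ ≤ M * M * nu w + ε * C := by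
    intro ε hε
    obtain ⟨x, y, h, hx, hy, hh, hF⟩ := hφ (S.image Prod.fst) ε hε
    have e : h ⊗ₜ[ℂ] slice φ w =
        (x ⊗ₜ[ℂ] 1) * w * (y ⊗ₜ[ℂ] 1) +
          ∑ i ∈ S, (-1 : ℂ) • ((x * i.1 * y - φ i.1 • h) ⊗ₜ[ℂ] i.2) := by
      simp only [hw, map_sum, slice_tmul, TensorProduct.tmul_sum, Finset.mul_sum,
        Finset.sum_mul, Algebra.TensorProduct.tmul_mul_tmul, one_mul, mul_one]
      rw [← Finset.sum_add_distrib]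
      refine Finset.sum_congr rfl fun i _ => ?_
      rw [TensorProduct.sub_tmul, TensorProduct.tmul_smul, TensorProduct.smul_tmul']
      module
    have h1 := hnu.le_tmul h (slice φ w)
    rw [hh, one_mul, e] at h1
    refine h1.trans ((hnu.add_le _ _).trans (add_le_add ?_ ?_))
    · have hM : 0 ≤ M := (norm_nonneg x).trans hx
      have hx' : nu (x ⊗ₜ[ℂ] (1 : B)) ≤ M := by
        refine (hnu.tmul_le x 1).trans ?_
        have : ‖(1 : B)‖ ≤ 1 := by
          rcases subsingleton_or_nontrivial B with hB | hB
          · rw [Subsingleton.elim (1 : B) 0, norm_zero]; exact zero_le_one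
          · exact CStarRing.norm_one.le
        nlinarith [norm_nonneg x, norm_nonneg (1 : B)]
      have hy' : nu (y ⊗ₜ[ℂ] (1 : B)) ≤ M := by
        refine (hnu.tmul_le y 1).trans ?_
        have : ‖(1 : B)‖ ≤ 1 := by
          rcases subsingleton_or_nontrivial B with hB | hB
          · rw [Subsingleton.elim (1 : B) 0, norm_zero]; exact zero_le_one
          · exact CStarRing.norm_one.le
        nlinarith [norm_nonneg y, norm_nonneg (1 : B)]
      calc nu ((x ⊗ₜ[ℂ] 1) * w * (y ⊗ₜ[ℂ] 1))
          ≤ nu ((x ⊗ₜ[ℂ] 1) * w) * nu (y ⊗ₜ[ℂ] 1) := hnu.mul_le _ _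
        _ ≤ (M * nu w) * M := by
            refine mul_le_mul ((hnu.mul_le _ _).trans ?_) hy' (hnu.nonneg _)
              (mul_nonneg hM (hnu.nonneg _))
            exact mul_le_mul_of_nonneg_right hx' (hnu.nonneg _)
        _ = M * M * nu w := by ring
    · refine (hnu.sum_le _ _).trans ?_
      rw [hC, Finset.mul_sum]
      refine Finset.sum_le_sum fun i hi => ?_
      rw [hnu.smul_eq]
      simp only [norm_neg, norm_one, one_mul]
      exact (hnu.tmul_le _ _).trans
        (mul_le_mul_of_nonneg_right (hF _ (Finset.mem_image_of_mem _ hi)) (norm_nonneg _))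
  refine le_of_forall_pos_le_add fun δ hδ => ?_
  refine (key (δ / (C + 1)) (by positivity)).trans ?_
  gcongr
  rw [div_mul_eq_mul_div, div_le_iff₀ (by positivity)]
  nlinarith

end Slice

/-! ### The norm defined by matrix representations -/

/-- Representations of `A` by `n × n` matrices. They need not be unital, so representations
on smaller spaces are included. -/
abbrev MatRep (n : ℕ) (A : Type) [CStarAlgebra A] : Type :=
  A →⋆ₙₐ[ℂ] Matrix (Fin n) (Fin n) ℂ

namespace MatRep
variable {n : ℕ} {A B : Type} [CStarAlgebra A] [CStarAlgebra B]

/-- A matrix representation as a linear map. -/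
def lin (ρ : MatRep n A) : A →ₗ[ℂ] Matrix (Fin n) (Fin n) ℂ where
  toFun := ρ
  map_add' := map_add ρ
  map_smul' := map_smul ρ

@[simp] lemma lin_apply (ρ : MatRep n A) (a : A) : ρ.lin a = ρ a := rfl

/-- The matrix coefficient `a ↦ ρ(a)ᵢⱼ` as a linear functional. -/
def coeff (ρ : MatRep n A) (i j : Fin n) : A →ₗ[ℂ] ℂ where
  toFun a := ρ a i j
  map_add' a b := by simp
  map_smul' c a := by simp

@[simp] lemma coeff_apply (ρ : MatRep n A) (i j : Fin n) (a : A) : ρ.coeff i j a = ρ a i j := rfl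

/-- The vector functional `a ↦ ⟨ξ, ρ(a) ξ⟩`. -/
def vec (ρ : MatRep n A) (ξ : Fin n → ℂ) : A →ₗ[ℂ] ℂ where
  toFun a := star ξ ⬝ᵥ (ρ a).mulVec ξ
  map_add' a b := by simp [Matrix.add_mulVec]
  map_smul' c a := by simp [Matrix.smul_mulVec]

lemma vec_apply (ρ : MatRep n A) (ξ : Fin n → ℂ) (a : A) :
    ρ.vec ξ a = star ξ ⬝ᵥ (ρ a).mulVec ξ := rfl

/-- A matrix representation is excisable if all its vector functionals are. The bound `2`
makes room for the vectors `eᵢ + c eⱼ` used in polarization. -/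
def IsExcisable (ρ : MatRep n A) : Prop :=
  ∀ ξ : Fin n → ℂ, ‖WithLp.toLp 2 ξ‖ ≤ 2 → Excisable 2 (ρ.vec ξ)

lemma norm_entry_le {ι : Type} [Fintype ι] [DecidableEq ι] (X : Matrix ι ι ℂ) (i j : ι) :
    ‖X i j‖ ≤ ‖X‖ := by
  have h := Matrix.l2_opNorm_mulVec X (EuclideanSpace.single j (1 : ℂ))
  simp only [PiLp.norm_single, norm_one, mul_one] at h
  refine le_trans ?_ h
  have h2 := PiLp.norm_apply_le (WithLp.toLp 2 (X.mulVec (EuclideanSpace.single j (1 : ℂ)))) i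
  simpa using h2

lemma norm_le_sum_entries {ι : Type} [Fintype ι] [DecidableEq ι] (X : Matrix ι ι ℂ) :
    ‖X‖ ≤ ∑ i, ∑ j, ‖X i j‖ := by
  have hs : ∀ (i j : ι) (c : ℂ), ‖Matrix.single i j c‖ ≤ ‖c‖ := by
    intro i j c
    rw [Matrix.l2_opNorm_def]
    refine ContinuousLinearMap.opNorm_le_bound _ (norm_nonneg _) fun v => ?_
    have : (Matrix.toLpLin 2 2 (Matrix.single i j c)) v = EuclideanSpace.single i (c * v j) := by
      ext k
      simp [Matrix.single_mulVec, Function.update_apply]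
    have h2 : ‖EuclideanSpace.single i (c * v j)‖ ≤ ‖c‖ * ‖v‖ := by
      rw [PiLp.norm_single, norm_mul]
      exact mul_le_mul_of_nonneg_left (PiLp.norm_apply_le v j) (norm_nonneg _)
    rw [← this] at h2
    exact h2
  conv_lhs => rw [Matrix.matrix_eq_sum_single X]
  refine (norm_sum_le _ _).trans (Finset.sum_le_sum fun i _ => ?_)
  exact (norm_sum_le _ _).trans (Finset.sum_le_sum fun j _ => hs i j _)

lemma norm_coeff_le (ρ : MatRep n A) (i j : Fin n) (a : A) : ‖ρ a i j‖ ≤ ‖a‖ :=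
  (norm_entry_le _ i j).trans (NonUnitalStarAlgHom.norm_apply_le ρ a)

/-- Polarization: matrix coefficients are combinations of vector functionals of vectors
`eᵢ + c eⱼ` with `c` a fourth root of unity. -/
lemma coeff_eq_vec (ρ : MatRep n A) (i j : Fin n) :
    ρ.coeff i j = (1 / 4 : ℂ) •
      (ρ.vec (Pi.single i 1 + Pi.single j 1) - ρ.vec (Pi.single i 1 + Pi.single j (-1))
        + (-Complex.I) • ρ.vec (Pi.single i 1 + Pi.single j Complex.I)
        + Complex.I • ρ.vec (Pi.single i 1 + Pi.single j (-Complex.I))) := by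
  have hv : ∀ (c : ℂ) (a : A), ρ.vec (Pi.single i 1 + Pi.single j c) a
      = ρ a i i + c * ρ a i j + (starRingEnd ℂ) c * ρ a j i
        + (starRingEnd ℂ) c * c * ρ a j j := by
    intro c a
    have hst : ∀ (k : Fin n) (z : ℂ),
        star (Pi.single k z : Fin n → ℂ) = Pi.single k ((starRingEnd ℂ) z) := by
      intro k z
      rw [← Pi.single_star]
      rfl
    simp only [vec_apply, star_add, hst, Matrix.mulVec_add, add_dotProduct,
      dotProduct_add, single_dotProduct, Matrix.mulVec_single, Matrix.col_apply,
      Pi.smul_apply, MulOpposite.smul_eq_mul_unop, MulOpposite.unop_op, map_one]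
    ring
  ext a
  simp only [LinearMap.smul_apply, LinearMap.add_apply, LinearMap.sub_apply, hv, coeff_apply,
    smul_eq_mul, map_one, map_neg, Complex.conj_I]
  ring_nf
  simp only [Complex.I_sq]
  ring

lemma norm_single_add_le (i j : Fin n) (c : ℂ) (hc : ‖c‖ = 1) :
    ‖WithLp.toLp 2 (Pi.single i 1 + Pi.single j c : Fin n → ℂ)‖ ≤ 2 := by
  have h1 : ‖(EuclideanSpace.single i (1 : ℂ) + EuclideanSpace.single j c)‖ ≤ 2 := by
    refine (norm_add_le _ _).trans ?_
    rw [PiLp.norm_single, PiLp.norm_single, hc, norm_one]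
    norm_num
  convert h1 using 2
  ext k
  simp [Pi.single_apply]

lemma slice_coeff_le {nu : A ⊗[ℂ] B → ℝ} (hnu : IsCStarNorm nu) {ρ : MatRep n A}
    (hρ : ρ.IsExcisable) (i j : Fin n) (w : A ⊗[ℂ] B) :
    ‖slice (ρ.coeff i j) w‖ ≤ 4 * nu w := by
  have hb : ∀ c : ℂ, ‖c‖ = 1 →
      ‖slice (ρ.vec (Pi.single i 1 + Pi.single j c)) w‖ ≤ 4 * nu w := by
    intro c hc
    refine (hnu.slice_le (hρ _ (norm_single_add_le i j c hc)) w).trans (le_of_eq (by ring))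
  have e : slice (ρ.coeff i j) w = (1 / 4 : ℂ) •
      (slice (ρ.vec (Pi.single i 1 + Pi.single j 1)) w
        - slice (ρ.vec (Pi.single i 1 + Pi.single j (-1))) w
        + (-Complex.I) • slice (ρ.vec (Pi.single i 1 + Pi.single j Complex.I)) w
        + Complex.I • slice (ρ.vec (Pi.single i 1 + Pi.single j (-Complex.I))) w) := by
    rw [coeff_eq_vec]
    simp [slice, LinearMap.rTensor_smul, LinearMap.rTensor_add, LinearMap.rTensor_sub]
  rw [e, norm_smul]
  have h1 := hb 1 (by simp)
  have h2 := hb (-1) (by simp)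
  have h3 := hb Complex.I (by simp)
  have h4 := hb (-Complex.I) (by simp)
  have hI : ∀ b : B, ‖Complex.I • b‖ = ‖b‖ := fun b => by rw [norm_smul]; simp
  have hI' : ∀ b : B, ‖(-Complex.I) • b‖ = ‖b‖ := fun b => by rw [norm_smul]; simp
  set s1 := slice (ρ.vec (Pi.single i 1 + Pi.single j 1)) w
  set s2 := slice (ρ.vec (Pi.single i 1 + Pi.single j (-1))) w
  set s3 := slice (ρ.vec (Pi.single i 1 + Pi.single j Complex.I)) w
  set s4 := slice (ρ.vec (Pi.single i 1 + Pi.single j (-Complex.I))) w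
  have h5 := norm_add_le (s1 - s2 + (-Complex.I) • s3) (Complex.I • s4)
  have h6 := norm_add_le (s1 - s2) ((-Complex.I) • s3)
  have h7 := norm_sub_le s1 s2
  rw [hI] at h5
  rw [hI'] at h6
  rw [show ‖(1 / 4 : ℂ)‖ = 1 / 4 by norm_num]
  linarith

/-- The representation `ρ ⊗ σ` of `A ⊗ B` on `ℂⁿ ⊗ ℂⁿ`. -/
def kron (ρ : MatRep n A) (σ : MatRep n B) :
    A ⊗[ℂ] B →ₗ[ℂ] Matrix (Fin n × Fin n) (Fin n × Fin n) ℂ :=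
  TensorProduct.lift ((Matrix.kroneckerBilinear (R := ℂ)).compl₁₂ ρ.lin σ.lin)

variable (ρ : MatRep n A) (σ : MatRep n B)

@[simp] lemma kron_tmul (a : A) (b : B) :
    kron ρ σ (a ⊗ₜ[ℂ] b) = Matrix.kroneckerMap (· * ·) (ρ a) (σ b) := rfl

lemma kron_mul (x y : A ⊗[ℂ] B) : kron ρ σ (x * y) = kron ρ σ x * kron ρ σ y := by
  induction x using TensorProduct.induction_on with
  | zero => simp
  | add x x' hx hx' => rw [add_mul, map_add, hx, hx', map_add, add_mul]
  | tmul a b =>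
    induction y using TensorProduct.induction_on with
    | zero => simp
    | add x x' hx hx' => rw [mul_add, map_add, hx, hx', map_add, mul_add]
    | tmul c d =>
      rw [Algebra.TensorProduct.tmul_mul_tmul, kron_tmul, kron_tmul, kron_tmul, map_mul, map_mul,
        Matrix.mul_kronecker_mul]

lemma kron_star (x : A ⊗[ℂ] B) : kron ρ σ (tensorStar A B x) = star (kron ρ σ x) := by
  induction x using TensorProduct.induction_on with
  | zero => simp
  | add x x' hx hx' => rw [map_add, map_add, hx, hx', map_add, star_add]
  | tmul a b =>
    rw [tensorStar_tmul, kron_tmul, kron_tmul, map_star, map_star, Matrix.star_eq_conjTranspose,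
      Matrix.star_eq_conjTranspose, Matrix.star_eq_conjTranspose, Matrix.conjTranspose_kronecker]

lemma kron_entry (x : A ⊗[ℂ] B) (i j k l : Fin n) :
    kron ρ σ x (i, k) (j, l) = σ (slice (ρ.coeff i j) x) k l := by
  induction x using TensorProduct.induction_on with
  | zero => simp
  | add x x' hx hx' => simp only [map_add, Matrix.add_apply, hx, hx']
  | tmul a b => simp

lemma norm_kron_star_mul (x : A ⊗[ℂ] B) :
    ‖kron ρ σ (tensorStar A B x * x)‖ = ‖kron ρ σ x‖ ^ 2 := by
  rw [kron_mul, kron_star, CStarRing.norm_star_mul_self, sq]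

/-- The norms of `x` in all the representations `ρ ⊗ σ` are uniformly bounded. -/
lemma exists_kron_bound (n : ℕ) (x : A ⊗[ℂ] B) :
    ∃ C : ℝ, ∀ (ρ : MatRep n A) (σ : MatRep n B), ‖kron ρ σ x‖ ≤ C := by
  induction x using TensorProduct.induction_on with
  | zero => exact ⟨0, by simp⟩
  | add x y hx hy =>
    obtain ⟨C, hC⟩ := hx
    obtain ⟨D, hD⟩ := hy
    exact ⟨C + D, fun ρ σ => by
      rw [map_add]; exact (norm_add_le _ _).trans (add_le_add (hC ρ σ) (hD ρ σ))⟩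
  | tmul a b =>
    refine ⟨∑ _i : Fin n × Fin n, ∑ _j : Fin n × Fin n, ‖a‖ * ‖b‖, fun ρ σ => ?_⟩
    refine (norm_le_sum_entries _).trans ?_
    refine Finset.sum_le_sum fun i _ => Finset.sum_le_sum fun j _ => ?_
    rw [kron_tmul, Matrix.kroneckerMap_apply, norm_mul]
    exact mul_le_mul (norm_coeff_le _ _ _ _) (norm_coeff_le _ _ _ _) (norm_nonneg _)
      (norm_nonneg _)

end MatRep

/-- The map `x ↦ x* x` on the algebraic tensor product; a C*-norm turns it into squaring. -/
def starSq {A B : Type} [CStarAlgebra A] [CStarAlgebra B] (x : A ⊗[ℂ] B) : A ⊗[ℂ] B :=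
  tensorStar A B x * x

lemma iterate_starSq {A B : Type} [CStarAlgebra A] [CStarAlgebra B] {p : A ⊗[ℂ] B → ℝ}
    (hp : ∀ x, p (tensorStar A B x * x) = p x ^ 2) (k : ℕ) (x : A ⊗[ℂ] B) :
    p (starSq^[k] x) = p x ^ (2 ^ k) := by
  induction k generalizing x with
  | zero => simp
  | succ k ih =>
    rw [Function.iterate_succ_apply, ih, starSq, hp, ← pow_mul, pow_succ']

/-- A constant `K` in front of arbitrarily high powers is irrelevant. -/
lemma le_of_forall_pow_le {a b K : ℝ} (hb : 0 ≤ b)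
    (h : ∀ k : ℕ, a ^ (2 ^ k) ≤ K * b ^ (2 ^ k)) : a ≤ b := by
  by_contra! hlt
  rcases hb.eq_or_lt with rfl | hb
  · have := h 1
    simp at this
    nlinarith
  have h1 : 1 < a / b := (one_lt_div hb).2 hlt
  obtain ⟨m, hm⟩ := pow_unbounded_of_one_lt K h1
  have h2 := hm.trans_le (pow_le_pow_right₀ h1.le (Nat.lt_two_pow_self (n := m)).le)
  have h3 := h m
  rw [div_pow, lt_div_iff₀ (by positivity)] at h2
  linarith

namespace MatRep
variable {n : ℕ} {A B : Type} [CStarAlgebra A] [CStarAlgebra B]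

/-- Excisable representations are contractive for every C*-norm. The coefficients are
bounded by the slice estimate, and the C*-identity removes the constant. -/
lemma norm_kron_le {nu : A ⊗[ℂ] B → ℝ} (hnu : IsCStarNorm nu) {ρ : MatRep n A}
    (hρ : ρ.IsExcisable) (σ : MatRep n B) (x : A ⊗[ℂ] B) : ‖kron ρ σ x‖ ≤ nu x := by
  set K : ℝ := ∑ _i : Fin n × Fin n, ∑ _j : Fin n × Fin n, 4 with hK
  have h1 : ∀ x, ‖kron ρ σ x‖ ≤ K * nu x := by
    intro x
    refine (norm_le_sum_entries _).trans ?_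
    rw [hK, Finset.sum_mul]
    refine Finset.sum_le_sum fun i _ => ?_
    rw [Finset.sum_mul]
    refine Finset.sum_le_sum fun j _ => ?_
    obtain ⟨i, k⟩ := i
    obtain ⟨j, l⟩ := j
    rw [kron_entry]
    exact (norm_coeff_le _ _ _ _).trans (slice_coeff_le hnu hρ i j x)
  refine le_of_forall_pow_le (K := K) (hnu.nonneg x) fun k => ?_
  rw [← iterate_starSq (p := fun x => ‖kron ρ σ x‖) (norm_kron_star_mul ρ σ),
    ← iterate_starSq hnu.cstar]
  exact h1 _

end MatRep

/-- `A` has enough excisable `n × n` matrix representations if they attain the norm of every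
nonzero element. -/
def HasReps (n : ℕ) (A : Type) [CStarAlgebra A] : Prop :=
  ∀ a : A, a ≠ 0 → ∃ ρ : MatRep n A, ρ.IsExcisable ∧ ‖ρ a‖ = ‖a‖

/-- The pairs of excisable representations of `A`. -/
abbrev RepPair (n : ℕ) (A : Type) [CStarAlgebra A] : Type :=
  {p : MatRep n A × MatRep n A // p.1.IsExcisable ∧ p.2.IsExcisable}

/-- The supremum of the norms in the representations `ρ ⊗ σ`, for `ρ` and `σ` excisable. -/
def repNorm (n : ℕ) (A : Type) [CStarAlgebra A] (x : A ⊗[ℂ] A) : ℝ :=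
  ⨆ p : RepPair n A, ‖MatRep.kron p.1.1 p.1.2 x‖

section RepNorm
variable {n : ℕ} {A : Type} [CStarAlgebra A]

lemma repNorm_bddAbove (x : A ⊗[ℂ] A) :
    BddAbove (Set.range fun p : RepPair n A => ‖MatRep.kron p.1.1 p.1.2 x‖) := by
  obtain ⟨C, hC⟩ := MatRep.exists_kron_bound n x
  exact ⟨C, by rintro _ ⟨p, rfl⟩; exact hC _ _⟩

lemma le_repNorm (p : RepPair n A) (x : A ⊗[ℂ] A) :
    ‖MatRep.kron p.1.1 p.1.2 x‖ ≤ repNorm n A x :=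
  le_ciSup (repNorm_bddAbove x) p

lemma repNorm_le {x : A ⊗[ℂ] A} {C : ℝ} (hC : 0 ≤ C)
    (h : ∀ p : RepPair n A, ‖MatRep.kron p.1.1 p.1.2 x‖ ≤ C) : repNorm n A x ≤ C :=
  Real.iSup_le h hC

lemma repNorm_nonneg (x : A ⊗[ℂ] A) : 0 ≤ repNorm n A x :=
  Real.iSup_nonneg fun _ => norm_nonneg _

lemma repNorm_cstar (x : A ⊗[ℂ] A) :
    repNorm n A (tensorStar A A x * x) = repNorm n A x ^ 2 := by
  apply le_antisymm
  · refine repNorm_le (by positivity) fun p => ?_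
    rw [MatRep.norm_kron_star_mul]
    exact pow_le_pow_left₀ (norm_nonneg _) (le_repNorm p x) 2
  · have h0 : 0 ≤ repNorm n A (tensorStar A A x * x) := repNorm_nonneg _
    have : repNorm n A x ≤ √(repNorm n A (tensorStar A A x * x)) := by
      refine repNorm_le (Real.sqrt_nonneg _) fun p => ?_
      refine Real.le_sqrt_of_sq_le ?_
      rw [← MatRep.norm_kron_star_mul]
      exact le_repNorm p _
    calc repNorm n A x ^ 2 ≤ √(repNorm n A (tensorStar A A x * x)) ^ 2 :=
          pow_le_pow_left₀ (repNorm_nonneg _) this 2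
      _ = _ := Real.sq_sqrt h0

lemma HasReps.eq_zero (hA : HasReps n A) {a : A}
    (h : ∀ ρ : MatRep n A, ρ.IsExcisable → ∀ i j, ρ a i j = 0) : a = 0 := by
  by_contra hne
  obtain ⟨ρ, hρ, he⟩ := hA a hne
  have : ρ a = 0 := by ext i j; exact h ρ hρ i j
  rw [this, norm_zero] at he
  exact hne (norm_eq_zero.1 he.symm)

/-- Separating families of functionals on the two factors separate the points of the
algebraic tensor product. -/
lemma HasReps.eq_zero_of_kron (hA : HasReps n A) {x : A ⊗[ℂ] A}
    (h : ∀ p : RepPair n A, MatRep.kron p.1.1 p.1.2 x = 0) : x = 0 := by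
  classical
  have h1 : ∀ ρ : MatRep n A, ρ.IsExcisable → ∀ i j, slice (ρ.coeff i j) x = 0 := by
    intro ρ hρ i j
    refine hA.eq_zero fun σ hσ k l => ?_
    rw [← MatRep.kron_entry, h ⟨(ρ, σ), hρ, hσ⟩]
    rfl
  -- slicing on the right by any functional `f` lands in the intersection of the kernels
  have h2 : ∀ f : A →ₗ[ℂ] ℂ, TensorProduct.rid ℂ A (LinearMap.lTensor A f x) = 0 := by
    intro f
    refine hA.eq_zero fun ρ hρ i j => ?_
    have e : ∀ y : A ⊗[ℂ] A, ρ (TensorProduct.rid ℂ A (LinearMap.lTensor A f y)) i j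
        = f (slice (ρ.coeff i j) y) := by
      intro y
      induction y using TensorProduct.induction_on with
      | zero => simp
      | add y z hy hz => simp only [map_add, Matrix.add_apply, hy, hz]
      | tmul a b => simp [mul_comm]
    rw [e, h1 ρ hρ i j, map_zero]
  let b := Module.Basis.ofVectorSpace ℂ A
  refine (TensorProduct.equivFinsuppOfBasisRight (M := A) b).injective ?_
  rw [map_zero]
  ext i
  have e : ∀ y : A ⊗[ℂ] A, TensorProduct.equivFinsuppOfBasisRight (M := A) b y i
      = TensorProduct.rid ℂ A (LinearMap.lTensor A (b.coord i) y) := by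
    intro y
    induction y using TensorProduct.induction_on with
    | zero => simp
    | add y z hy hz => simp only [map_add, Finsupp.add_apply, hy, hz]
    | tmul a b => simp
  rw [e, h2]
  rfl

lemma HasReps.isCStarNorm (hA : HasReps n A) : IsCStarNorm (repNorm n A) where
  eq_zero_iff x := by
    constructor
    · intro h
      refine hA.eq_zero_of_kron fun p => norm_le_zero_iff.1 ?_
      rw [← h]
      exact le_repNorm p x
    · rintro rfl
      exact le_antisymm (repNorm_le le_rfl fun p => by simp) (repNorm_nonneg _)
  nonneg := repNorm_nonneg
  add_le x y := by
    refine repNorm_le (add_nonneg (repNorm_nonneg _) (repNorm_nonneg _)) fun p => ?_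
    rw [map_add]
    exact (norm_add_le _ _).trans (add_le_add (le_repNorm p x) (le_repNorm p y))
  smul_eq c x := by
    simp only [repNorm, map_smul, norm_smul]
    exact (Real.mul_iSup_of_nonneg (norm_nonneg c) _).symm
  mul_le x y := by
    refine repNorm_le (mul_nonneg (repNorm_nonneg _) (repNorm_nonneg _)) fun p => ?_
    rw [MatRep.kron_mul]
    exact (norm_mul_le _ _).trans
      (mul_le_mul (le_repNorm p x) (le_repNorm p y) (norm_nonneg _) (repNorm_nonneg _))
  star_eq x := by
    simp only [repNorm, MatRep.kron_star, norm_star]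
  cstar := repNorm_cstar

/-- Takesaki's theorem in this setting: the minimal norm is computed by the excisable matrix
representations. -/
lemma HasReps.minNorm_eq (hA : HasReps n A) (x : A ⊗[ℂ] A) : minNorm A A x = repNorm n A x := by
  apply le_antisymm
  · refine csInf_le ⟨0, ?_⟩ ⟨_, hA.isCStarNorm, rfl⟩
    rintro _ ⟨nu, hnu, rfl⟩
    exact hnu.nonneg x
  · refine le_csInf ⟨_, _, hA.isCStarNorm, rfl⟩ ?_
    rintro _ ⟨nu, hnu, rfl⟩
    exact repNorm_le (hnu.nonneg x) fun p => MatRep.norm_kron_le hnu p.2.1 _ x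

end RepNorm

/-! ### Pure states attaining the norm -/

lemma eq_of_norm_le_of_re_eq {z : ℂ} {r : ℝ} (h1 : ‖z‖ ≤ r) (h2 : z.re = r) : z = r := by
  have h3 := Complex.re_eq_norm.1 (le_antisymm (Complex.re_le_norm z) (h1.trans h2.ge))
  rw [Complex.ext_iff]
  exact ⟨by simpa using h2, by simpa using (Complex.le_def.1 h3).2.symm⟩

section States
variable {A : Type} [CStarAlgebra A]

/-- The weak*-compact face of the state space consisting of the states with value `‖b‖` at `b`,
as a set of functions on `A`. -/
def stateFace (b : A) : Set (A → ℂ) :=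
  {φ | (∀ x y, φ (x + y) = φ x + φ y) ∧ (∀ (c : ℂ) x, φ (c • x) = c * φ x) ∧
    (∀ x, ‖φ x‖ ≤ ‖x‖) ∧ φ 1 = 1 ∧ φ b = ‖b‖}

lemma isCompact_stateFace (b : A) : IsCompact (stateFace b) := by
  have hK : IsCompact (Set.univ.pi fun x : A => Metric.closedBall (0 : ℂ) ‖x‖) :=
    isCompact_univ_pi fun x => isCompact_closedBall _ _
  refine hK.of_isClosed_subset ?_ fun φ hφ x _ => by simpa using hφ.2.2.1 x
  simp only [stateFace, Set.ofPred_and, Set.ofPred_forall]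
  refine IsClosed.inter ?_ (IsClosed.inter ?_ (IsClosed.inter ?_ (IsClosed.inter ?_ ?_)))
  · exact isClosed_iInter fun x => isClosed_iInter fun y =>
      isClosed_eq (by fun_prop) (by fun_prop)
  · exact isClosed_iInter fun x => isClosed_iInter fun y =>
      isClosed_eq (by fun_prop) (by fun_prop)
  · exact isClosed_iInter fun x => isClosed_le (by fun_prop) (by fun_prop)
  · exact isClosed_eq (by fun_prop) (by fun_prop)
  · exact isClosed_eq (by fun_prop) (by fun_prop)

lemma nonempty_stateFace [PartialOrder A] [StarOrderedRing A] [Nontrivial A] {b : A}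
    (hb : 0 ≤ b) : (stateFace b).Nonempty := by
  have h1 : ‖1 + b‖ = 1 + ‖b‖ := by
    apply le_antisymm
    · simpa using norm_add_le 1 b
    · have h0 : (0 : A) ≤ 1 + b := add_nonneg zero_le_one hb
      have hr : 1 ≤ ‖1 + b‖ := by
        simpa using CStarAlgebra.norm_le_norm_of_nonneg_of_le zero_le_one
          (show (1 : A) ≤ 1 + b from le_add_of_nonneg_right hb)
      have h3 := (CStarAlgebra.norm_le_iff_le_algebraMap (1 + b) (norm_nonneg _) h0).1 le_rfl
      have h4 : b ≤ algebraMap ℝ A (‖1 + b‖ - 1) := by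
        rw [map_sub, map_one, le_sub_iff_add_le, add_comm]
        exact h3
      have := (CStarAlgebra.norm_le_iff_le_algebraMap b (by linarith) hb).2 h4
      linarith
  have h2 : ‖1 + b‖ ≠ 0 := by rw [h1]; positivity
  obtain ⟨g, hg, hgb⟩ := exists_dual_vector ℂ (1 + b) h2
  have hle : ∀ x, ‖g x‖ ≤ ‖x‖ := fun x => by simpa [hg] using g.le_opNorm x
  rw [map_add, h1] at hgb
  have e1 : (g 1).re + (g b).re = 1 + ‖b‖ := by
    have := congrArg Complex.re hgb
    simpa using this
  have a1 : ‖g 1‖ ≤ 1 := by simpa using hle 1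
  have a2 := hle b
  have r1 := (Complex.re_le_norm (g 1))
  have r2 := (Complex.re_le_norm (g b))
  refine ⟨g, fun x y => map_add g x y, fun c x => by simp, hle, ?_, ?_⟩
  · simpa using eq_of_norm_le_of_re_eq a1 (by linarith)
  · exact eq_of_norm_le_of_re_eq a2 (by linarith)

/-- A contractive unital functional is real on self-adjoint elements: otherwise it would be
too large at `a + it` for large real `t`. -/
lemma stateFace_im_eq_zero {b : A} {φ : A → ℂ} (hφ : φ ∈ stateFace b) {a : A}
    (ha : IsSelfAdjoint a) : (φ a).im = 0 := by
  obtain ⟨hadd, hsmul, hle, h1, -⟩ := hφ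
  have hone : ‖(1 : A)‖ ≤ 1 := by
    rcases subsingleton_or_nontrivial A with hA | hA
    · rw [Subsingleton.elim (1 : A) 0, norm_zero]; exact zero_le_one
    · exact CStarRing.norm_one.le
  have key : ∀ t : ℝ, 2 * (φ a).im * t ≤ ‖a‖ ^ 2 := by
    intro t
    have e1 : star (a + (t * Complex.I) • (1 : A)) * (a + (t * Complex.I) • (1 : A))
        = a * a + ((t ^ 2 : ℝ) : ℂ) • (1 : A) := by
      simp only [star_add, ha.star_eq, star_smul, star_one, add_mul, mul_add, smul_mul_assoc,
        mul_smul_comm, mul_one, one_mul, RCLike.star_def, map_mul, Complex.conj_ofReal,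
        Complex.conj_I]
      rw [show ((t ^ 2 : ℝ) : ℂ) = t * Complex.I * (t * -Complex.I) by
        push_cast; linear_combination ((t : ℂ) ^ 2) * Complex.I_sq]
      module
    have e2 : ‖a + (t * Complex.I) • (1 : A)‖ ^ 2 ≤ ‖a‖ ^ 2 + t ^ 2 := by
      rw [sq, ← CStarRing.norm_star_mul_self, e1]
      refine (norm_add_le _ _).trans (add_le_add ?_ ?_)
      · rw [sq]; exact norm_mul_le _ _
      · rw [norm_smul, Complex.norm_real, Real.norm_of_nonneg (sq_nonneg t)]
        nlinarith [sq_nonneg t]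
    have e3 := hle (a + (t * Complex.I) • (1 : A))
    have e4 : ‖φ (a + (t * Complex.I) • (1 : A))‖ ^ 2 ≤ ‖a‖ ^ 2 + t ^ 2 :=
      (pow_le_pow_left₀ (norm_nonneg _) e3 2).trans e2
    rw [hadd, hsmul, h1, mul_one, ← Complex.normSq_eq_norm_sq, Complex.normSq_apply] at e4
    simp at e4
    nlinarith [sq_nonneg (φ a).re, sq_nonneg (φ a).im]
  by_contra hne
  have h2 := key ((‖a‖ ^ 2 + 1) / (2 * (φ a).im))
  rw [mul_div_cancel₀ _ (by simpa using hne)] at h2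
  linarith

open scoped ComplexOrder in
lemma stateFace_nonneg [PartialOrder A] [StarOrderedRing A] {b : A} {φ : A → ℂ}
    (hφ : φ ∈ stateFace b) {a : A} (ha : 0 ≤ a) : 0 ≤ φ a := by
  have him := stateFace_im_eq_zero hφ ha.isSelfAdjoint
  obtain ⟨hadd, hsmul, hle, h1, -⟩ := hφ
  rw [Complex.nonneg_iff]
  refine ⟨?_, him.symm⟩
  have h2 : ‖algebraMap ℝ A ‖a‖ - a‖ ≤ ‖a‖ := by
    have := (SpectrumRestricts.nnreal_iff_nnnorm ha.isSelfAdjoint (le_refl ‖a‖₊)).1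
      (SpectrumRestricts.nnreal_of_nonneg ha)
    exact_mod_cast this
  have h3 := (hle _).trans h2
  have h4 : φ (algebraMap ℝ A ‖a‖ - a) = ‖a‖ - φ a := by
    rw [sub_eq_add_neg, hadd, ← neg_one_smul ℂ a, hsmul]
    rw [Algebra.algebraMap_eq_smul_one, ← Complex.coe_smul, hsmul, h1]
    ring
  rw [h4] at h3
  have h5 := (Complex.re_le_norm _).trans h3
  simp at h5
  exact h5

open scoped ComplexOrder InnerProductSpace in
/-- The GNS construction for `φ`, with a cyclic vector `ξ`. -/
lemma exists_gns {b : A} {φ : A → ℂ} (hφ : φ ∈ stateFace b) :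
    ∃ (H : Type) (_ : NormedAddCommGroup H) (_ : InnerProductSpace ℂ H) (_ : CompleteSpace H)
      (π : A →⋆ₐ[ℂ] (H →L[ℂ] H)) (ξ : H), (∀ a, ⟪ξ, π a ξ⟫_ℂ = φ a) ∧
      ∀ K : Submodule ℂ H, IsClosed (K : Set H) → (∀ a, π a ξ ∈ K) → K = ⊤ := by
  let _ : PartialOrder A := CStarAlgebra.spectralOrder A
  have _ : StarOrderedRing A := CStarAlgebra.spectralOrderedRing A
  let f : A →ₚ[ℂ] ℂ := PositiveLinearMap.mk₀
    { toFun := φ, map_add' := hφ.1, map_smul' := hφ.2.1 } fun x hx => stateFace_nonneg hφ hx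
  have hf : ∀ a, f a = φ a := fun a => rfl
  have hact : ∀ a, f.gnsStarAlgHom a (f.toPreGNS 1 : f.GNS) = (f.toPreGNS a : f.GNS) := by
    intro a
    simp
  refine ⟨f.GNS, inferInstance, inferInstance, inferInstance, f.gnsStarAlgHom,
    (f.toPreGNS 1 : f.GNS), fun a => ?_, fun K hK h => ?_⟩
  · rw [hact, UniformSpace.Completion.inner_coe, PositiveLinearMap.preGNS_inner_def]
    simp [hf]
  · rw [eq_top_iff]
    intro x _
    refine UniformSpace.Completion.induction_on x hK fun y => ?_
    have := h (f.ofPreGNS y)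
    rwa [hact] at this

open scoped InnerProductSpace in
/-- The GNS representation of an extreme point of `stateFace b` is irreducible: an invariant
subspace decomposes the cyclic vector orthogonally, and hence the state convexly. -/
lemma irreducible_of_extreme {b : A} {φ : A → ℂ} (hφ : φ ∈ (stateFace b).extremePoints ℝ)
    {H : Type} [NormedAddCommGroup H] [InnerProductSpace ℂ H] [CompleteSpace H]
    (π : A →⋆ₐ[ℂ] (H →L[ℂ] H)) (ξ : H) (hπ : ∀ a, ⟪ξ, π a ξ⟫_ℂ = φ a)
    (hcyc : ∀ K : Submodule ℂ H, IsClosed (K : Set H) → (∀ a, π a ξ ∈ K) → K = ⊤)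
    (K : Submodule ℂ H) (hK : IsClosed (K : Set H)) (hinv : ∀ a, ∀ x ∈ K, π a x ∈ K) :
    K = ⊥ ∨ K = ⊤ := by
  have hadj : ∀ a (x y : H), ⟪x, π a y⟫_ℂ = ⟪π (star a) x, y⟫_ℂ := by
    intro a x y
    rw [map_star, ContinuousLinearMap.star_eq_adjoint, ContinuousLinearMap.adjoint_inner_left]
  have hinv' : ∀ a, ∀ x ∈ Kᗮ, π a x ∈ Kᗮ := by
    intro a x hx
    rw [Submodule.mem_orthogonal]
    intro u hu
    rw [hadj]
    exact (Submodule.mem_orthogonal K x).1 hx _ (hinv _ u hu)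
  have : CompleteSpace K := hK.completeSpace_coe
  by_cases hξK : ξ ∈ K
  · exact Or.inr (hcyc K hK fun a => hinv a ξ hξK)
  by_cases hξK' : ξ ∈ Kᗮ
  · left
    have := hcyc Kᗮ (Submodule.isClosed_orthogonal K) fun a => hinv' a ξ hξK'
    rwa [Submodule.orthogonal_eq_top_iff] at this
  exfalso
  obtain ⟨v, hv, w, hw, hvw⟩ := K.exists_add_mem_mem_orthogonal ξ
  have hv0 : v ≠ 0 := by
    rintro rfl
    rw [zero_add] at hvw
    exact hξK' (hvw ▸ hw)
  have hw0 : w ≠ 0 := by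
    rintro rfl
    rw [add_zero] at hvw
    exact hξK (hvw ▸ hv)
  obtain ⟨⟨hadd, hsmul, hle, h1, hb⟩, hext⟩ := hφ
  have c1 : ∀ a, ⟪v, π a w⟫_ℂ = 0 := fun a =>
    (Submodule.mem_orthogonal K _).1 (hinv' a w hw) v hv
  have c2 : ∀ a, ⟪w, π a v⟫_ℂ = 0 := fun a =>
    (Submodule.mem_orthogonal' K _).1 hw _ (hinv a v hv)
  have hsum : ∀ a, φ a = ⟪v, π a v⟫_ℂ + ⟪w, π a w⟫_ℂ := by
    intro a
    rw [← hπ, hvw, map_add, inner_add_left, inner_add_right, inner_add_right, c1, c2]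
    ring
  have hpi : ∀ a, ‖π a‖ ≤ ‖a‖ := fun a => NonUnitalStarAlgHom.norm_apply_le π a
  have hn : ‖v‖ ^ 2 + ‖w‖ ^ 2 = 1 := by
    have := hsum 1
    rw [h1, map_one] at this
    simp only [one_apply_eq_self, inner_self_eq_norm_sq_to_K] at this
    apply Complex.ofReal_injective
    push_cast
    exact this.symm
  have hvp : 0 < ‖v‖ ^ 2 := by positivity
  have hwp : 0 < ‖w‖ ^ 2 := by positivity
  -- the normalised vector functionals of `v` and `w` lie in the face
  have bound : ∀ (u : H), ∀ a, ‖⟪u, π a u⟫_ℂ‖ ≤ ‖u‖ ^ 2 * ‖a‖ := by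
    intro u a
    calc ‖⟪u, π a u⟫_ℂ‖ ≤ ‖u‖ * ‖π a u‖ := norm_inner_le_norm _ _
      _ ≤ ‖u‖ * (‖a‖ * ‖u‖) := by
          gcongr
          exact ((π a).le_opNorm u).trans (by gcongr; exact hpi a)
      _ = ‖u‖ ^ 2 * ‖a‖ := by ring
  have mem : ∀ u : H, 0 < ‖u‖ ^ 2 → ⟪u, π b u⟫_ℂ = ‖u‖ ^ 2 * ‖b‖ →
      (fun a => ((‖u‖ ^ 2 : ℝ) : ℂ)⁻¹ * ⟪u, π a u⟫_ℂ) ∈ stateFace b := by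
    intro u hu hub
    have hu' : ((‖u‖ ^ 2 : ℝ) : ℂ) ≠ 0 := by exact_mod_cast hu.ne'
    refine ⟨fun x y => ?_, fun c x => ?_, fun x => ?_, ?_, ?_⟩
    · simp only [map_add, _root_.add_apply, inner_add_right]; ring
    · simp only [map_smul, _root_.smul_apply, inner_smul_right]; ring
    · rw [norm_mul, norm_inv, Complex.norm_real, Real.norm_of_nonneg hu.le,
        inv_mul_le_iff₀ hu]
      exact bound u x
    · simp only [map_one, one_apply_eq_self, inner_self_eq_norm_sq_to_K]
      push_cast at hu' ⊢
      exact inv_mul_cancel₀ hu'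
    · simp only [hub]
      push_cast at hu' ⊢
      rw [inv_mul_cancel_left₀ hu']
  have attain : ⟪v, π b v⟫_ℂ = ‖v‖ ^ 2 * ‖b‖ ∧ ⟪w, π b w⟫_ℂ = ‖w‖ ^ 2 * ‖b‖ := by
    have e := hsum b
    rw [hb] at e
    have e' : ‖b‖ = (⟪v, π b v⟫_ℂ).re + (⟪w, π b w⟫_ℂ).re := by
      have := congrArg Complex.re e
      simpa using this
    have r1 := (Complex.re_le_norm _).trans (bound v b)
    have r2 := (Complex.re_le_norm _).trans (bound w b)
    have e'' : ‖v‖ ^ 2 * ‖b‖ + ‖w‖ ^ 2 * ‖b‖ = ‖b‖ := by rw [← add_mul, hn, one_mul]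
    constructor
    · have := eq_of_norm_le_of_re_eq (bound v b) (by linarith)
      rw [this]; push_cast; rfl
    · have := eq_of_norm_le_of_re_eq (bound w b) (by linarith)
      rw [this]; push_cast; rfl
  have key := hext (mem v hvp attain.1) (mem w hwp attain.2)
    ⟨‖v‖ ^ 2, ‖w‖ ^ 2, hvp, hwp, hn, by
      have hv' : ((‖v‖ ^ 2 : ℝ) : ℂ) ≠ 0 := by exact_mod_cast hvp.ne'
      have hw' : ((‖w‖ ^ 2 : ℝ) : ℂ) ≠ 0 := by exact_mod_cast hwp.ne'
      ext a
      simp only [Pi.add_apply, Pi.smul_apply, Complex.real_smul]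
      rw [mul_inv_cancel_left₀ hv', mul_inv_cancel_left₀ hw', hsum]⟩
  -- hence `v` and `‖v‖² ξ` have the same inner products with all `π a ξ`
  have horth : ∀ a, ⟪v - (‖v‖ ^ 2 : ℂ) • ξ, π a ξ⟫_ℂ = 0 := by
    intro a
    have hv' : ((‖v‖ ^ 2 : ℝ) : ℂ) ≠ 0 := by exact_mod_cast hvp.ne'
    have e := congrFun key a
    beta_reduce at e
    have e2 : ⟪v, π a v⟫_ℂ = ((‖v‖ ^ 2 : ℝ) : ℂ) * φ a := by
      rw [← e, mul_inv_cancel_left₀ hv']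
    have e3 : ⟪v, π a ξ⟫_ℂ = ⟪v, π a v⟫_ℂ := by
      rw [hvw, map_add, inner_add_right, c1, add_zero]
    rw [inner_sub_left, inner_smul_left, hπ, e3, e2]
    simp
  have hz : v - (‖v‖ ^ 2 : ℂ) • ξ = 0 := by
    have htop := hcyc (ℂ ∙ (v - (‖v‖ ^ 2 : ℂ) • ξ))ᗮ (Submodule.isClosed_orthogonal _)
      fun a => Submodule.mem_orthogonal_singleton_iff_inner_right.2 (horth a)
    have : v - (‖v‖ ^ 2 : ℂ) • ξ ∈ (ℂ ∙ (v - (‖v‖ ^ 2 : ℂ) • ξ))ᗮ := htop ▸ Submodule.mem_top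
    exact inner_self_eq_zero.1 (Submodule.mem_orthogonal_singleton_iff_inner_right.1 this)
  refine hξK ?_
  have hv' : (‖v‖ ^ 2 : ℂ) ≠ 0 := by exact_mod_cast hvp.ne'
  have : ξ = (‖v‖ ^ 2 : ℂ)⁻¹ • v := by
    rw [eq_inv_smul_iff₀ hv']
    exact (sub_eq_zero.1 hz).symm
  rw [this]
  exact K.smul_mem _ hv

end States

/-! ### Excision in finite-dimensional irreducible representations -/

section Density
variable {A : Type} [CStarAlgebra A] {H : Type} [NormedAddCommGroup H] [InnerProductSpace ℂ H]
  [FiniteDimensional ℂ H]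

/-- Burnside's theorem, by Schur's lemma and the Jacobson density theorem. -/
lemma surjective_of_irreducible [Nontrivial H] (π : A →ₐ[ℂ] (H →L[ℂ] H))
    (hirr : ∀ K : Submodule ℂ H, (∀ a, ∀ x ∈ K, π a x ∈ K) → K = ⊥ ∨ K = ⊤)
    (T : H →ₗ[ℂ] H) : ∃ a : A, ∀ x, π a x = T x := by
  let _ : Module A H := Module.compHom H π.toRingHom
  have hsm : ∀ (a : A) (x : H), a • x = π a x := fun _ _ => rfl
  have hc : ∀ (c : ℂ) (x : H), (algebraMap ℂ A c) • x = c • x := by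
    intro c x
    rw [hsm, AlgHomClass.commutes, Algebra.algebraMap_eq_smul_one]
    simp
  -- `A`-submodules are `ℂ`-subspaces
  have hbt : ∀ N : Submodule A H, N = ⊥ ∨ N = ⊤ := by
    intro N
    let K : Submodule ℂ H :=
      { N.toAddSubmonoid with
        smul_mem' := fun c x hx => by rw [← hc]; exact N.smul_mem _ hx }
    have hmem : ∀ x, x ∈ K ↔ x ∈ N := fun x => Iff.rfl
    rcases hirr K (fun a x hx => N.smul_mem a hx) with h | h
    · left
      rw [Submodule.eq_bot_iff]
      intro x hx
      exact (Submodule.mem_bot ℂ).1 (h ▸ (hmem x).2 hx)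
    · right
      rw [Submodule.eq_top_iff']
      intro x
      exact (hmem x).1 (h ▸ Submodule.mem_top)
  have : IsSimpleModule A H := { eq_bot_or_eq_top := hbt }
  have hschur : ∀ f : Module.End A H, ∃ c : ℂ, ∀ x, f x = c • x := by
    intro f
    let g : Module.End ℂ H :=
      { toFun := f
        map_add' := map_add f
        map_smul' := fun c x => by rw [← hc, map_smul, hc]; rfl }
    obtain ⟨c, hcg⟩ := Module.End.exists_eigenvalue g
    obtain ⟨v, hv⟩ := hcg.exists_hasEigenvector
    let N : Submodule A H :=
      { carrier := {x | f x = c • x}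
        add_mem' := fun {x y} hx hy => by
          simp only [Set.mem_ofPred_eq] at hx hy ⊢
          rw [map_add, hx, hy, smul_add]
        zero_mem' := by simp
        smul_mem' := fun a x hx => by
          simp only [Set.mem_ofPred_eq] at hx ⊢
          rw [map_smul, hx, hsm, hsm, map_smul] }
    refine ⟨c, fun x => ?_⟩
    have hvN : v ∈ N := hv.apply_eq_smul
    rcases hbt N with h | h
    · exact absurd ((Submodule.mem_bot A).1 (h ▸ hvN)) hv.2
    · have : x ∈ N := h ▸ Submodule.mem_top
      exact this
  let F : Module.End (Module.End A H) H :=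
    { toFun := T
      map_add' := map_add T
      map_smul' := fun f x => by
        obtain ⟨c, hf⟩ := hschur f
        simp only [Module.End.smul_def, RingHom.id_apply, hf, map_smul] }
  classical
  let e := Module.finBasis ℂ H
  obtain ⟨a, ha⟩ := jacobson_density F (Finset.univ.image e)
  refine ⟨a, fun x => ?_⟩
  have : (π a : H →ₗ[ℂ] H) = T := e.ext fun i => (ha (e i) (by simp)).symm
  exact congrArg (fun S : H →ₗ[ℂ] H => S x) this

end Density

section Excision
variable {A : Type} [CStarAlgebra A]
open scoped InnerProductSpace

lemma apply_eq_self_of_mul {H : Type} [NormedAddCommGroup H] [InnerProductSpace ℂ H]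
    [CompleteSpace H] (π : A →⋆ₐ[ℂ] (H →L[ℂ] H)) {ξ : H} {g h : A} {δ : ℝ} (hδ : 0 < δ)
    (hgξ : π g ξ = 0) (e : h * g = δ • (1 - h)) : π h ξ = ξ := by
  have e4 : π (h * g) ξ = 0 := by rw [map_mul, mul_apply_eq_comp, hgξ, map_zero]
  have e5 : π ((δ : ℂ) • (1 - h)) ξ = (δ : ℂ) • (ξ - π h ξ) := by
    rw [map_smul, map_sub, map_one]
    rfl
  rw [e, ← Complex.coe_smul, e5] at e4
  have h2 := (smul_eq_zero.1 e4).resolve_left (by exact_mod_cast hδ.ne')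
  exact (sub_eq_zero.1 h2).symm

/-- The element `h = δ (δ + g)⁻¹` for `g ≥ 0`. -/
lemma exists_resolvent [PartialOrder A] [StarOrderedRing A] {g : A} (hg0 : 0 ≤ g) {δ : ℝ}
    (hδ : 0 < δ) : ∃ h : A, IsSelfAdjoint h ∧ ‖h‖ ≤ 1 ∧ ‖1 - h‖ ≤ 1 ∧ h * g = δ • (1 - h) := by
  have hgsa : IsSelfAdjoint g := hg0.isSelfAdjoint
  have hspec : ∀ t ∈ spectrum ℝ g, 0 ≤ t := fun t ht => spectrum_nonneg_of_nonneg hg0 ht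
  have hcont : ContinuousOn (fun t : ℝ => δ / (δ + t)) (spectrum ℝ g) := by
    refine ContinuousOn.div (by fun_prop) (by fun_prop) fun t ht => ?_
    have := hspec t ht
    positivity
  set h : A := cfc (fun t : ℝ => δ / (δ + t)) g with hh
  have hsa : IsSelfAdjoint h := cfc_predicate _ _
  have hle : ‖h‖ ≤ 1 := by
    refine norm_cfc_le zero_le_one fun t ht => ?_
    have := hspec t ht
    rw [Real.norm_of_nonneg (by positivity), div_le_one (by positivity)]
    linarith
  -- `h * g = δ (1 - h)`
  have e1 : h * g = δ • (1 - h) := by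
    have e2 : h * g = cfc (fun t : ℝ => δ / (δ + t) * t) g := by
      conv_lhs => rw [← cfc_id' ℝ g]
      rw [hh, cfc_mul _ _ _ hcont (by fun_prop), cfc_id' ℝ g]
    have e3 : δ • (1 - h) = cfc (fun t : ℝ => δ * (1 - δ / (δ + t))) g := by
      rw [hh, cfc_const_mul δ (fun t : ℝ => 1 - δ / (δ + t)) g (by fun_prop),
        cfc_sub (fun _ : ℝ => (1 : ℝ)) _ g (by fun_prop) hcont, cfc_const_one ℝ g]
    rw [e2, e3]
    refine cfc_congr fun t ht => ?_
    have := hspec t ht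
    have h2 : δ + t ≠ 0 := by positivity
    field_simp
    ring
  have h1h : ‖1 - h‖ ≤ 1 := by
    have : 1 - h = cfc (fun t : ℝ => 1 - δ / (δ + t)) g := by
      rw [hh, cfc_sub (fun _ : ℝ => (1 : ℝ)) _ g (by fun_prop) hcont, cfc_const_one ℝ g]
    rw [this]
    refine norm_cfc_le zero_le_one fun t ht => ?_
    have := hspec t ht
    have h3 : δ / (δ + t) ≤ 1 := (div_le_one (by positivity)).2 (by linarith)
    have h4 : 0 ≤ δ / (δ + t) := by positivity
    rw [Real.norm_of_nonneg (by linarith)]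
    linarith
  exact ⟨h, hsa, hle, h1h, e1⟩

/-- Elements that kill the unit vector `ξ` are simultaneously almost killed by a norm one
element `h` fixing `ξ`, namely `h = δ (δ + g)⁻¹` with `g` the sum of the `l* l`. -/
lemma exists_local_unit {H : Type} [NormedAddCommGroup H] [InnerProductSpace ℂ H]
    [CompleteSpace H] (π : A →⋆ₐ[ℂ] (H →L[ℂ] H)) {ξ : H} (hξ : ‖ξ‖ = 1) (G : Finset A)
    (hG : ∀ l ∈ G, π l ξ = 0) {δ : ℝ} (hδ : 0 < δ) :
    ∃ h : A, IsSelfAdjoint h ∧ ‖h‖ = 1 ∧ ∀ l ∈ G, ‖l * h‖ ^ 2 ≤ δ := by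
  let _ : PartialOrder A := CStarAlgebra.spectralOrder A
  have _ : StarOrderedRing A := CStarAlgebra.spectralOrderedRing A
  set g : A := ∑ l ∈ G, star l * l with hg
  have hg0 : 0 ≤ g := Finset.sum_nonneg fun l _ => star_mul_self_nonneg l
  have hgξ : π g ξ = 0 := by
    rw [hg, map_sum, _root_.sum_apply]
    refine Finset.sum_eq_zero fun l hl => ?_
    rw [map_mul, mul_apply_eq_comp, hG l hl, map_zero]
  obtain ⟨h, hsa, hle, h1h, e1⟩ := exists_resolvent hg0 hδ
  have hfix : π h ξ = ξ := apply_eq_self_of_mul π hδ hgξ e1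
  have hge : 1 ≤ ‖h‖ := by
    have h2 := (π h).le_opNorm ξ
    rw [hfix, hξ, mul_one] at h2
    exact h2.trans (NonUnitalStarAlgHom.norm_apply_le π h)
  refine ⟨h, hsa, le_antisymm hle hge, fun l hl => ?_⟩
  calc ‖l * h‖ ^ 2 = ‖star (l * h) * (l * h)‖ := by rw [CStarRing.norm_star_mul_self, sq]
    _ ≤ ‖h * g * h‖ := by
      refine CStarAlgebra.norm_le_norm_of_nonneg_of_le (star_mul_self_nonneg _) ?_
      have h5 : star l * l ≤ g :=
        Finset.single_le_sum (f := fun l => star l * l) (fun l _ => star_mul_self_nonneg l) hl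
      have h6 := star_left_conjugate_le_conjugate h5 h
      rw [hsa.star_eq] at h6
      rw [star_mul, hsa.star_eq]
      simpa only [mul_assoc] using h6
    _ ≤ ‖h * g‖ * ‖h‖ := norm_mul_le _ _
    _ ≤ δ * 1 := by
      rw [e1, norm_smul, Real.norm_of_nonneg hδ.le]
      have := mul_le_mul h1h hle (norm_nonneg _) zero_le_one
      calc δ * ‖1 - h‖ * ‖h‖ = δ * (‖1 - h‖ * ‖h‖) := by ring
        _ ≤ _ := by rw [one_mul] at this; gcongr
    _ = δ := mul_one δ

/-- Excision of the vector states of a finite-dimensional irreducible representation. -/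
lemma excisable_of_irreducible [Nontrivial A] {H : Type} [NormedAddCommGroup H]
    [InnerProductSpace ℂ H] [CompleteSpace H] [FiniteDimensional ℂ H]
    (π : A →⋆ₐ[ℂ] (H →L[ℂ] H))
    (hirr : ∀ K : Submodule ℂ H, (∀ a, ∀ x ∈ K, π a x ∈ K) → K = ⊥ ∨ K = ⊤)
    {η : H} (hη : ‖η‖ ≤ 2) : Excisable 2 (fun a => ⟪η, π a η⟫_ℂ) := by
  classical
  intro F ε hε
  rcases eq_or_ne η 0 with rfl | hη0
  · exact ⟨0, 0, 1, by simp, by simp, by simp, fun a _ => by simpa using hε.le⟩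
  have : Nontrivial H := ⟨η, 0, hη0⟩
  set r : ℝ := ‖η‖ with hr
  have hr0 : 0 < r := norm_pos_iff.2 hη0
  obtain ⟨ξ, hξ, hηξ⟩ : ∃ ξ : H, ‖ξ‖ = 1 ∧ η = (r : ℂ) • ξ := by
    refine ⟨(r : ℂ)⁻¹ • η, ?_, ?_⟩
    · rw [norm_smul, norm_inv, Complex.norm_real, Real.norm_of_nonneg hr0.le]
      exact inv_mul_cancel₀ hr0.ne'
    · rw [smul_inv_smul₀]
      exact_mod_cast hr0.ne'
  -- `π q` is the projection onto the orthogonal complement of `ξ`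
  obtain ⟨q, hq⟩ := surjective_of_irreducible (π : A →ₐ[ℂ] (H →L[ℂ] H)) hirr
    ((1 - InnerProductSpace.rankOne ℂ ξ ξ : H →L[ℂ] H) : H →ₗ[ℂ] H)
  have hq' : ∀ x, π q x = x - ⟪ξ, x⟫_ℂ • ξ := by
    intro x
    have := hq x
    simpa using this
  have hqs : π (star q) ξ = 0 := by
    refine ext_inner_left ℂ fun x => ?_
    rw [map_star, ContinuousLinearMap.star_eq_adjoint, ContinuousLinearMap.adjoint_inner_right,
      hq', inner_sub_left, inner_smul_left, inner_self_eq_norm_sq_to_K, hξ]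
    simp
  set φ : A → ℂ := fun a => ⟪ξ, π a ξ⟫_ℂ with hφ
  let a' : A → A := fun a => a - φ a • 1
  let l₁ : A → A := fun a => a' a - q * a' a
  let l₂ : A → A := fun a => star (q * a' a)
  have hl₁ : ∀ a, π (l₁ a) ξ = 0 := by
    intro a
    have e1 : ⟪ξ, π (a' a) ξ⟫_ℂ = 0 := by
      simp only [a', map_sub, map_smul, map_one]
      rw [_root_.sub_apply, inner_sub_right, _root_.smul_apply, inner_smul_right,
        one_apply_eq_self, inner_self_eq_norm_sq_to_K, hξ]
      simp [hφ]
    simp only [l₁]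
    rw [map_sub, _root_.sub_apply, map_mul, mul_apply_eq_comp, hq', e1]
    simp
  have hl₂ : ∀ a, π (l₂ a) ξ = 0 := by
    intro a
    simp only [l₂, star_mul, map_mul]
    rw [mul_apply_eq_comp, hqs, map_zero]
  obtain ⟨h, hsa, hh, hhl⟩ := exists_local_unit π hξ (F.image l₁ ∪ F.image l₂)
    (by
      intro l hl
      rcases Finset.mem_union.1 hl with hl | hl
      · obtain ⟨a, -, rfl⟩ := Finset.mem_image.1 hl
        exact hl₁ a
      · obtain ⟨a, -, rfl⟩ := Finset.mem_image.1 hl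
        exact hl₂ a)
    (δ := (ε / 8) ^ 2) (by positivity)
  have hhh : ‖(r : ℂ) • h‖ ≤ 2 := by
    rw [norm_smul, hh, mul_one, Complex.norm_real, Real.norm_of_nonneg hr0.le]
    exact hη
  refine ⟨(r : ℂ) • h, (r : ℂ) • h, h * h, hhh, hhh, ?_, fun a ha => ?_⟩
  · have := CStarRing.norm_star_mul_self (x := h)
    rw [hsa.star_eq] at this
    rw [this, hh, mul_one]
  have b1 : ‖l₁ a * h‖ ≤ ε / 8 := by
    have := hhl (l₁ a) (Finset.mem_union_left _ (Finset.mem_image_of_mem _ ha))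
    exact (pow_le_pow_iff_left₀ (norm_nonneg _) (by positivity) two_ne_zero).1 this
  have b2 : ‖l₂ a * h‖ ≤ ε / 8 := by
    have := hhl (l₂ a) (Finset.mem_union_right _ (Finset.mem_image_of_mem _ ha))
    exact (pow_le_pow_iff_left₀ (norm_nonneg _) (by positivity) two_ne_zero).1 this
  have e : (r : ℂ) • h * a * ((r : ℂ) • h) - ⟪η, π a η⟫_ℂ • (h * h)
      = ((r : ℂ) * r) • (h * (l₁ a * h) + star (l₂ a * h) * h) := by
    have e1 : ⟪η, π a η⟫_ℂ = r * r * φ a := by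
      rw [hηξ, map_smul, inner_smul_left, inner_smul_right]
      simp [hφ, mul_assoc]
    have e2 : h * (l₁ a * h) + star (l₂ a * h) * h = h * a' a * h := by
      simp only [l₁, l₂, star_mul, star_star, hsa.star_eq]
      noncomm_ring
    rw [e1, e2]
    simp only [a', mul_sub, sub_mul, smul_mul_assoc, mul_smul_comm, mul_one, smul_sub, smul_smul]
  rw [e, norm_smul]
  have hrr : ‖(r : ℂ) * r‖ ≤ 4 := by
    rw [norm_mul, Complex.norm_real, Real.norm_of_nonneg hr0.le]
    nlinarith
  have hsum : ‖h * (l₁ a * h) + star (l₂ a * h) * h‖ ≤ ε / 8 + ε / 8 := by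
    refine (norm_add_le _ _).trans (add_le_add ?_ ?_)
    · refine (norm_mul_le _ _).trans ?_
      rw [hh, one_mul]; exact b1
    · refine (norm_mul_le _ _).trans ?_
      rw [hh, mul_one, norm_star]; exact b2
  calc _ ≤ 4 * (ε / 8 + ε / 8) := mul_le_mul hrr hsum (norm_nonneg _) (by norm_num)
    _ = ε := by ring

end Excision

section Subhomogeneous
variable {A : Type} [CStarAlgebra A]
open scoped InnerProductSpace

lemma exists_linearIsometry_euclidean {H : Type} [NormedAddCommGroup H] [InnerProductSpace ℂ H]
    [FiniteDimensional ℂ H] {n : ℕ} (hn : Module.finrank ℂ H ≤ n) :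
    Nonempty (H →ₗᵢ[ℂ] EuclideanSpace ℂ (Fin n)) := by
  let e := stdOrthonormalBasis ℂ H
  let f : H →ₗ[ℂ] EuclideanSpace ℂ (Fin n) :=
    e.toBasis.constr ℂ fun i => EuclideanSpace.single (Fin.castLE hn i) (1 : ℂ)
  refine ⟨f.isometryOfOrthonormal (v := e.toBasis) (by simp) ?_⟩
  have : f ∘ e.toBasis = fun i => EuclideanSpace.single (Fin.castLE hn i) (1 : ℂ) := by
    ext1 i
    exact e.toBasis.constr_basis _ _ _
  rw [this]
  exact (EuclideanSpace.orthonormal_single (𝕜 := ℂ) (ι := Fin n)).comp _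
    (Fin.castLE_injective hn)

/-- A representation on a subspace of `ℂⁿ`, extended by zero to a matrix representation. -/
def MatRep.ofIsometry {n : ℕ} {H : Type} [NormedAddCommGroup H] [InnerProductSpace ℂ H]
    [CompleteSpace H] (π : A →⋆ₐ[ℂ] (H →L[ℂ] H)) (V : H →ₗᵢ[ℂ] EuclideanSpace ℂ (Fin n)) :
    MatRep n A :=
  NonUnitalStarAlgHom.comp
    ((Matrix.toEuclideanCLM (n := Fin n) (𝕜 := ℂ)).symm : _ →⋆ₙₐ[ℂ] _)
    { toFun := fun a => V.toContinuousLinearMap ∘L π a ∘L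
        ContinuousLinearMap.adjoint V.toContinuousLinearMap
      map_smul' := fun c a => by ext x; simp
      map_zero' := by ext x; simp
      map_add' := fun a b => by ext x; simp
      map_mul' := fun a b => by
        ext1 x
        have h := fun y => congrArg (fun S : H →L[ℂ] H => S y) (LinearIsometry.adjoint_comp_self V)
        simp only [ContinuousLinearMap.comp_apply, ContinuousLinearMap.one_def,
          ContinuousLinearMap.id_apply] at h
        simp only [map_mul, ContinuousLinearMap.comp_apply, mul_apply_eq_comp, h]
      map_star' := fun a => by
        simp only [map_star, ContinuousLinearMap.star_eq_adjoint, ContinuousLinearMap.adjoint_comp,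
          ContinuousLinearMap.adjoint_adjoint, ContinuousLinearMap.comp_assoc] }

section OfIsometry
variable {n : ℕ} {H : Type} [NormedAddCommGroup H] [InnerProductSpace ℂ H] [CompleteSpace H]
  (π : A →⋆ₐ[ℂ] (H →L[ℂ] H)) (V : H →ₗᵢ[ℂ] EuclideanSpace ℂ (Fin n))

lemma MatRep.toEuclideanCLM_ofIsometry (a : A) :
    Matrix.toEuclideanCLM (n := Fin n) (𝕜 := ℂ) (MatRep.ofIsometry π V a) =
      V.toContinuousLinearMap ∘L π a ∘L ContinuousLinearMap.adjoint V.toContinuousLinearMap :=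
  StarAlgEquiv.apply_symm_apply _ _

lemma MatRep.vec_ofIsometry (ξ : Fin n → ℂ) (a : A) :
    (MatRep.ofIsometry π V).vec ξ a =
      ⟪ContinuousLinearMap.adjoint V.toContinuousLinearMap (WithLp.toLp 2 ξ),
        π a (ContinuousLinearMap.adjoint V.toContinuousLinearMap (WithLp.toLp 2 ξ))⟫_ℂ := by
  rw [ContinuousLinearMap.adjoint_inner_left]
  have h := congrArg (fun S => S (WithLp.toLp 2 ξ)) (MatRep.toEuclideanCLM_ofIsometry π V a)
  simp only [ContinuousLinearMap.comp_apply] at h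
  rw [← h, Matrix.toEuclideanCLM_toLp, EuclideanSpace.inner_toLp_toLp, MatRep.vec_apply,
    dotProduct_comm]

lemma MatRep.norm_le_ofIsometry (a : A) (ξ : H) (hξ : ‖ξ‖ = 1) :
    ‖π a ξ‖ ≤ ‖MatRep.ofIsometry π V a‖ := by
  have h1 : ContinuousLinearMap.adjoint V.toContinuousLinearMap (V ξ) = ξ :=
    congrArg (fun S : H →L[ℂ] H => S ξ) (LinearIsometry.adjoint_comp_self V)
  have h := (Matrix.toEuclideanCLM (n := Fin n) (𝕜 := ℂ) (MatRep.ofIsometry π V a)).le_opNorm (V ξ)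
  rw [Matrix.l2_opNorm_toEuclideanCLM, MatRep.toEuclideanCLM_ofIsometry] at h
  simpa [h1, hξ] using h

end OfIsometry

/-- Every element `a` attains its norm in the GNS representation of a pure state with value
`‖a‖²` at `a* a`; if `A` is subhomogeneous, this representation is finite dimensional. -/
lemma IsSubhomogeneous.hasReps {n : ℕ} (hA : IsSubhomogeneous n A) : HasReps n A := by
  intro a ha
  have : Nontrivial A := ⟨a, 0, ha⟩
  let _ : PartialOrder A := CStarAlgebra.spectralOrder A
  have _ : StarOrderedRing A := CStarAlgebra.spectralOrderedRing A
  obtain ⟨φ, hφ⟩ := (isCompact_stateFace (star a * a)).extremePoints_nonempty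
    (nonempty_stateFace (star_mul_self_nonneg a))
  obtain ⟨H, _, _, _, π, ξ, hπ, hcyc⟩ := exists_gns hφ.1
  have hirr := irreducible_of_extreme hφ π ξ hπ hcyc
  obtain ⟨hfin, hdim⟩ := hA H π hirr
  obtain ⟨V⟩ := exists_linearIsometry_euclidean hdim
  have hirr' : ∀ K : Submodule ℂ H, (∀ a, ∀ x ∈ K, π a x ∈ K) → K = ⊥ ∨ K = ⊤ :=
    fun K => hirr K (Submodule.closed_of_finiteDimensional K)
  have hξ : ‖ξ‖ = 1 := by
    have h1 := hπ 1
    rw [hφ.1.2.2.2.1, map_one, one_apply_eq_self, inner_self_eq_norm_sq_to_K] at h1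
    have h2 : ‖ξ‖ ^ 2 = 1 := by
      apply Complex.ofReal_injective
      push_cast
      exact h1
    exact (pow_eq_one_iff_of_nonneg (norm_nonneg _) two_ne_zero).1 h2
  have hπa : ‖π a ξ‖ = ‖a‖ := by
    have h1 := hπ (star a * a)
    rw [hφ.1.2.2.2.2, map_mul, mul_apply_eq_comp, map_star, ContinuousLinearMap.star_eq_adjoint,
      ContinuousLinearMap.adjoint_inner_right, inner_self_eq_norm_sq_to_K,
      CStarRing.norm_star_mul_self] at h1
    have h2 : ‖π a ξ‖ ^ 2 = ‖a‖ ^ 2 := by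
      apply Complex.ofReal_injective
      push_cast
      rw [sq (‖a‖ : ℂ)]
      exact h1.trans (Complex.ofReal_mul _ _)
    exact (pow_left_inj₀ (norm_nonneg _) (norm_nonneg _) two_ne_zero).1 h2
  refine ⟨MatRep.ofIsometry π V, fun η hη => ?_, le_antisymm
    (NonUnitalStarAlgHom.norm_apply_le _ a) (hπa ▸ MatRep.norm_le_ofIsometry π V a ξ hξ)⟩
  have h1 : ⇑((MatRep.ofIsometry π V).vec η) = _ := funext (MatRep.vec_ofIsometry π V η)
  rw [h1]
  refine excisable_of_irreducible π hirr' (le_trans ?_ hη)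
  refine (ContinuousLinearMap.le_opNorm _ _).trans ?_
  have h2 : ‖ContinuousLinearMap.adjoint V.toContinuousLinearMap‖ ≤ 1 := by
    rw [LinearIsometryEquiv.norm_map]
    exact V.norm_toContinuousLinearMap_le
  exact mul_le_of_le_one_left (norm_nonneg _) h2

end Subhomogeneous

/-! ### Ultraproducts -/

section Ultraproduct
variable {n : ℕ} {I : Type} {U : Ultrafilter I} {A : I → Type} [∀ i, CStarAlgebra (A i)]
  {B : Type} [CStarAlgebra B] {π : (∀ i, A i) → B}

lemma Bdd.add {f g : ∀ i, A i} (hf : Bdd f) (hg : Bdd g) : Bdd (f + g) := by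
  obtain ⟨M, hM⟩ := hf
  obtain ⟨N, hN⟩ := hg
  exact ⟨M + N, fun i => (norm_add_le _ _).trans (add_le_add (hM i) (hN i))⟩

lemma Bdd.mul {f g : ∀ i, A i} (hf : Bdd f) (hg : Bdd g) : Bdd (f * g) := by
  obtain ⟨M, hM⟩ := hf
  obtain ⟨N, hN⟩ := hg
  exact ⟨M * N, fun i => (norm_mul_le _ _).trans
    (mul_le_mul (hM i) (hN i) (norm_nonneg _) ((norm_nonneg _).trans (hM i)))⟩

lemma Bdd.star {f : ∀ i, A i} (hf : Bdd f) : Bdd (star f) := by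
  obtain ⟨M, hM⟩ := hf
  exact ⟨M, fun i => (norm_star (f i)).trans_le (hM i)⟩

lemma Bdd.smul {f : ∀ i, A i} (c : ℂ) (hf : Bdd f) : Bdd (c • f) := by
  obtain ⟨M, hM⟩ := hf
  exact ⟨‖c‖ * M, fun i => (norm_smul_le c (f i)).trans
    (mul_le_mul_of_nonneg_left (hM i) (norm_nonneg _))⟩

lemma bdd_one : Bdd (1 : ∀ i, A i) := by
  refine ⟨1, fun i => ?_⟩
  rcases subsingleton_or_nontrivial (A i) with hB | hB
  · rw [Subsingleton.elim ((1 : ∀ i, A i) i) 0, norm_zero]; exact zero_le_one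
  · exact CStarRing.norm_one.le

/-- A family of matrix representations of the `A i` induces one of the ultraproduct, by taking
limits along `U` in the finite-dimensional space of matrices. -/
lemma IsCStarUltraproduct.exists_limRep (hB : IsCStarUltraproduct U A B π)
    (ρ : ∀ i, MatRep n (A i)) :
    ∃ τ : MatRep n B, ∀ g : ∀ i, A i, Bdd g →
      Tendsto (fun i => ρ i (g i)) (U : Filter I) (𝓝 (τ (π g))) := by
  have hlim : ∀ f : ∀ i, A i, Bdd f →
      ∃ X, Tendsto (fun i => ρ i (f i)) (U : Filter I) (𝓝 X) := by
    rintro f ⟨M, hM⟩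
    have _ : ProperSpace (Matrix (Fin n) (Fin n) ℂ) := FiniteDimensional.proper ℂ _
    obtain ⟨X, -, hX⟩ := (isCompact_closedBall (0 : Matrix (Fin n) (Fin n) ℂ) M).ultrafilter_le_nhds
      (U.map fun i => ρ i (f i)) (by
        rw [Ultrafilter.coe_map, le_principal_iff]
        refine Filter.mem_map.2 (Filter.univ_mem' fun i => ?_)
        simpa using (NonUnitalStarAlgHom.norm_apply_le (ρ i) (f i)).trans (hM i))
    exact ⟨X, hX⟩
  choose lift hlift hπ using hB.surj
  have hl : ∀ b, Bdd (lift b) := fun b => ⟨_, hlift b⟩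
  choose T hT using fun b => hlim (lift b) (hl b)
  have key : ∀ g : ∀ i, A i, Bdd g →
      Tendsto (fun i => ρ i (g i)) (U : Filter I) (𝓝 (T (π g))) := by
    intro g hg
    have h0 : π (g + (-1 : ℂ) • lift (π g)) = 0 := by
      rw [hB.map_add _ _ hg ((hl _).smul _), hB.map_smul _ _ (hl _), hπ]
      simp
    have h1 := hB.norm_eq _ (hg.add ((hl (π g)).smul (-1)))
    rw [h0, norm_zero] at h1
    have h2 : Tendsto (fun i => ρ i (g i) - ρ i (lift (π g) i)) (U : Filter I) (𝓝 0) := by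
      refine squeeze_zero_norm (fun i => ?_) h1
      rw [← map_sub]
      refine (NonUnitalStarAlgHom.norm_apply_le _ _).trans (le_of_eq ?_)
      simp [sub_eq_add_neg]
    simpa using h2.add (hT (π g))
  have uniq : ∀ g : ∀ i, A i, Bdd g → ∀ X,
      Tendsto (fun i => ρ i (g i)) (U : Filter I) (𝓝 X) → T (π g) = X :=
    fun g hg X hX => tendsto_nhds_unique (key g hg) hX
  refine ⟨{ toFun := T, map_smul' := ?_, map_zero' := ?_, map_add' := ?_, map_mul' := ?_,
            map_star' := ?_ }, key⟩
  · intro c b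
    have h := uniq _ ((hl b).smul c) (c • T b) (by
      simpa using (hT b).const_smul c)
    rwa [hB.map_smul _ _ (hl b), hπ] at h
  · have h := uniq _ ((hl 0).smul 0) 0 (by simp)
    rwa [hB.map_smul _ _ (hl 0), zero_smul] at h
  · intro b c
    have h := uniq _ ((hl b).add (hl c)) (T b + T c) (by
      simpa using (hT b).add (hT c))
    rwa [hB.map_add _ _ (hl b) (hl c), hπ, hπ] at h
  · intro b c
    have h := uniq _ ((hl b).mul (hl c)) (T b * T c) (by
      simpa using (hT b).mul (hT c))
    rwa [hB.map_mul _ _ (hl b) (hl c), hπ, hπ] at h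
  · intro b
    have h := uniq _ (hl b).star (star (T b)) (by
      exact (hT b).star.congr fun i => (StarHomClass.map_star (ρ i) (lift b i)).symm)
    rwa [hB.map_star _ (hl b), hπ] at h

/-- Elements excising the functionals of the `ρ i` form bounded families, whose images in the
ultraproduct excise the functionals of the limit representation. -/
lemma IsCStarUltraproduct.isExcisable (hB : IsCStarUltraproduct U A B π)
    {ρ : ∀ i, MatRep n (A i)} (hρ : ∀ᶠ i in (U : Filter I), (ρ i).IsExcisable)
    {τ : MatRep n B} (hτ : ∀ g : ∀ i, A i, Bdd g →
      Tendsto (fun i => ρ i (g i)) (U : Filter I) (𝓝 (τ (π g)))) : τ.IsExcisable := by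
  classical
  intro ξ hξ F ε hε
  choose lift hlift hπ using hB.surj
  have hl : ∀ b, Bdd (lift b) := fun b => ⟨_, hlift b⟩
  have hch : ∀ i, ∃ x y h : A i, ‖x‖ ≤ 2 ∧ ‖y‖ ≤ 2 ∧ ‖h‖ ≤ 1 ∧ ((ρ i).IsExcisable →
      ‖h‖ = 1 ∧ ∀ b ∈ F, ‖x * lift b i * y - (ρ i).vec ξ (lift b i) • h‖ ≤ ε) := by
    intro i
    by_cases hi : (ρ i).IsExcisable
    · obtain ⟨x, y, h, hx, hy, hh, hF⟩ := hi ξ hξ (F.image fun b => lift b i) ε hε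
      exact ⟨x, y, h, hx, hy, hh.le, fun _ => ⟨hh, fun b hb =>
        hF _ (Finset.mem_image_of_mem _ hb)⟩⟩
    · exact ⟨0, 0, 0, by simp, by simp, by simp, fun h => absurd h hi⟩
  choose x y h hx hy hh hF using hch
  have hxb : Bdd x := ⟨2, hx⟩
  have hyb : Bdd y := ⟨2, hy⟩
  have hhb : Bdd h := ⟨1, hh⟩
  refine ⟨π x, π y, π h, le_of_tendsto' (hB.norm_eq x hxb) hx,
    le_of_tendsto' (hB.norm_eq y hyb) hy, ?_, fun b hb => ?_⟩
  · refine tendsto_nhds_unique (hB.norm_eq h hhb) ?_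
    refine tendsto_const_nhds.congr' ?_
    filter_upwards [hρ] with i hi using (hF i hi).1.symm
  · have e : π x * b * π y - τ.vec ξ b • π h
        = π (x * lift b * y + (-τ.vec ξ b) • h) := by
      rw [hB.map_add _ _ ((hxb.mul (hl b)).mul hyb) (hhb.smul _),
        hB.map_mul _ _ (hxb.mul (hl b)) hyb, hB.map_mul _ _ hxb (hl b), hB.map_smul _ _ hhb, hπ,
        neg_smul, sub_eq_add_neg]
    rw [e]
    have hv : Tendsto (fun i => (ρ i).vec ξ (lift b i)) (U : Filter I) (𝓝 (τ.vec ξ b)) := by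
      have h1 := hτ (lift b) (hl b)
      rw [hπ] at h1
      have hc : Continuous fun X : Matrix (Fin n) (Fin n) ℂ => star ξ ⬝ᵥ X.mulVec ξ := by
        fun_prop
      exact (hc.tendsto _).comp h1
    have hv' : Tendsto (fun i => ε + ‖(ρ i).vec ξ (lift b i) - τ.vec ξ b‖) (U : Filter I)
        (𝓝 (ε + 0)) :=
      tendsto_const_nhds.add (tendsto_iff_norm_sub_tendsto_zero.1 hv)
    rw [add_zero] at hv'
    refine le_of_tendsto_of_tendsto
      (hB.norm_eq _ (((hxb.mul (hl b)).mul hyb).add (hhb.smul _))) hv' ?_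
    filter_upwards [hρ] with i hi
    have h1 : (x * lift b * y + (-τ.vec ξ b) • h) i
        = (x i * lift b i * y i - (ρ i).vec ξ (lift b i) • h i)
          + ((ρ i).vec ξ (lift b i) - τ.vec ξ b) • h i := by
      simp only [Pi.add_apply, Pi.mul_apply, Pi.smul_apply, neg_smul, sub_smul, Pi.neg_apply]
      abel
    rw [h1]
    refine (norm_add_le _ _).trans (add_le_add ((hF i hi).2 b hb) ?_)
    rw [norm_smul]
    exact mul_le_of_le_one_right (norm_nonneg _) (hh i)

/-- The norm of the class of a family `f` is attained in the limit of representations attaining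
the norms of the `f i`. -/
lemma IsCStarUltraproduct.hasReps (hB : IsCStarUltraproduct U A B π)
    (hA : ∀ i, HasReps n (A i)) : HasReps n B := by
  intro b hb
  obtain ⟨f, hf, rfl⟩ := hB.surj b
  have hfb : Bdd f := ⟨_, hf⟩
  have hch : ∀ i, ∃ ρ : MatRep n (A i), ‖ρ (f i)‖ = ‖f i‖ ∧ (f i ≠ 0 → ρ.IsExcisable) := by
    intro i
    by_cases hi : f i = 0
    · exact ⟨0, by simp [hi], fun h => absurd hi h⟩
    · obtain ⟨ρ, h1, h2⟩ := hA i (f i) hi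
      exact ⟨ρ, h2, fun _ => h1⟩
  choose ρ hρ hρ' using hch
  obtain ⟨τ, hτ⟩ := hB.exists_limRep ρ
  have hn := hB.norm_eq f hfb
  refine ⟨τ, hB.isExcisable (ρ := ρ) ?_ hτ, ?_⟩
  · filter_upwards [hn.eventually_ne (norm_ne_zero_iff.2 hb)] with i hi
    exact hρ' i (norm_ne_zero_iff.1 hi)
  · refine tendsto_nhds_unique ((hτ f hfb).norm.congr hρ) hn

end Ultraproduct

/-! ### Terms -/

section Terms

/-- The term `∑ j, z j • t j`. -/
def CTerm.lsum {N : ℕ} {J : Type} [Fintype J] (z : J → ℂ) (t : J → CTerm N) : CTerm N :=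
  Finset.univ.toList.foldr (fun j s => CTerm.add (CTerm.smul (z j) (t j)) s)
    (CTerm.smul 0 CTerm.one)

lemma CTerm.eval_lsum {N : ℕ} {J : Type} [Fintype J] (z : J → ℂ) (t : J → CTerm N)
    {A : Type} [CStarAlgebra A] (c : Fin N → A) :
    (CTerm.lsum z t).eval c = ∑ j, z j • (t j).eval c := by
  have h : ∀ l : List J, (l.foldr (fun j s => CTerm.add (CTerm.smul (z j) (t j)) s)
      (CTerm.smul 0 CTerm.one)).eval c = (l.map fun j => z j • (t j).eval c).sum := by
    intro l
    induction l with
    | nil => simp [CTerm.eval]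
    | cons j l ih => simp [CTerm.eval, ih]
  rw [CTerm.lsum, h, Finset.sum_map_toList]

lemma CTerm.exists_bound {N : ℕ} (t : CTerm N) : ∃ C : ℝ, 0 ≤ C ∧
    ∀ (A : Type) [CStarAlgebra A] (c : Fin N → A), (∀ i, ‖c i‖ ≤ 1) → ‖t.eval c‖ ≤ C := by
  induction t with
  | var i => exact ⟨1, zero_le_one, fun A _ c hc => by rw [CTerm.eval]; exact hc i⟩
  | one =>
    refine ⟨1, zero_le_one, fun A _ c hc => ?_⟩
    simp only [CTerm.eval]
    rcases subsingleton_or_nontrivial A with hB | hB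
    · rw [Subsingleton.elim (1 : A) 0, norm_zero]; exact zero_le_one
    · exact CStarRing.norm_one.le
  | add s t hs ht =>
    obtain ⟨C, hC, hs⟩ := hs
    obtain ⟨D, hD, ht⟩ := ht
    exact ⟨C + D, add_nonneg hC hD, fun A _ c hc => by
      rw [CTerm.eval]
      exact (norm_add_le _ _).trans (add_le_add (hs A c hc) (ht A c hc))⟩
  | mul s t hs ht =>
    obtain ⟨C, hC, hs⟩ := hs
    obtain ⟨D, hD, ht⟩ := ht
    exact ⟨C * D, mul_nonneg hC hD, fun A _ c hc => by
      rw [CTerm.eval]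
      exact (norm_mul_le _ _).trans (mul_le_mul (hs A c hc) (ht A c hc) (norm_nonneg _) hC)⟩
  | star t ht =>
    obtain ⟨D, hD, ht⟩ := ht
    exact ⟨D, hD, fun A _ c hc => by
      rw [CTerm.eval]
      exact (norm_star _).trans_le (ht A c hc)⟩
  | smul z t ht =>
    obtain ⟨D, hD, ht⟩ := ht
    exact ⟨‖z‖ * D, mul_nonneg (norm_nonneg _) hD, fun A _ c hc => by
      rw [CTerm.eval]
      exact (norm_smul_le _ _).trans (mul_le_mul_of_nonneg_left (ht A c hc) (norm_nonneg _))⟩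

lemma CTerm.exists_bound_family {N : ℕ} {J : Type} [Fintype J] (t : J → CTerm N) :
    ∃ C : ℝ, 0 ≤ C ∧ ∀ (A : Type) [CStarAlgebra A] (c : Fin N → A), (∀ i, ‖c i‖ ≤ 1) →
      ∀ j, ‖(t j).eval c‖ ≤ C := by
  choose C hC h using fun j => (t j).exists_bound
  exact ⟨∑ j, C j, Finset.sum_nonneg fun j _ => hC j, fun A _ c hc j =>
    (h j A c hc).trans (Finset.single_le_sum (fun j _ => hC j) (Finset.mem_univ j))⟩

/-- The iterates of `x ↦ x* x` at `∑ aₖ ⊗ bₖ` are again sums of elementary tensors of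
terms in the `aₖ` and `bₖ`, uniformly in the algebra. -/
lemma exists_terms_iterate_starSq (m k : ℕ) : ∃ (J : Type) (_ : Fintype J)
    (t s : J → CTerm (m + m)), ∀ (A : Type) [CStarAlgebra A] (a b : Fin m → A),
      starSq^[k] (∑ i, a i ⊗ₜ[ℂ] b i) =
        ∑ j, (t j).eval (Fin.append a b) ⊗ₜ[ℂ] (s j).eval (Fin.append a b) := by
  induction k with
  | zero =>
    refine ⟨Fin m, inferInstance, fun i => CTerm.var (Fin.castAdd m i),
      fun i => CTerm.var (Fin.natAdd m i), fun A _ a b => ?_⟩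
    simp only [Function.iterate_zero, id, CTerm.eval, Fin.append_left, Fin.append_right]
  | succ k ih =>
    obtain ⟨J, _, t, s, h⟩ := ih
    refine ⟨J × J, inferInstance, fun j => CTerm.mul (CTerm.star (t j.1)) (t j.2),
      fun j => CTerm.mul (CTerm.star (s j.1)) (s j.2), fun A _ a b => ?_⟩
    rw [Function.iterate_succ_apply', h, starSq, map_sum, Finset.sum_mul_sum,
      Fintype.sum_prod_type]
    simp [CTerm.eval, tensorStar_tmul]

/-- Finitely many terms control the norms of all combinations `∑ z j • t j` with
bounded coefficients, by compactness of the set of coefficients. -/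
lemma exists_terms_combination {N : ℕ} {J : Type} [Fintype J] (t : J → CTerm N) (C : ℝ)
    {δ : ℝ} (hδ : 0 < δ) : ∃ l : List (CTerm N),
      ∀ (A A' : Type) [CStarAlgebra A] [CStarAlgebra A'] (c : Fin N → A) (c' : Fin N → A'),
        (∀ i, ‖c i‖ ≤ 1) → (∀ i, ‖c' i‖ ≤ 1) →
        (∀ p ∈ l, ‖p.eval c‖ ≤ ‖p.eval c'‖ + δ / 2) → ∀ z : J → ℂ, (∀ j, ‖z j‖ ≤ C) →
        ‖∑ j, z j • (t j).eval c‖ ≤ ‖∑ j, z j • (t j).eval c'‖ + δ := by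
  obtain ⟨D, hD, hb⟩ := CTerm.exists_bound_family t
  set η : ℝ := δ / (4 * (Fintype.card J * D + 1)) with hη
  have hη0 : 0 < η := by positivity
  have hηle : Fintype.card J * (η * D) ≤ δ / 4 := by
    have h1 : η * (4 * (Fintype.card J * D + 1)) = δ := div_mul_cancel₀ _ (by positivity)
    nlinarith
  obtain ⟨Z, -, hZfin, hZ⟩ := (isCompact_closedBall (0 : J → ℂ) (max C 0)).finite_cover_balls hη0
  refine ⟨hZfin.toFinset.toList.map fun z => CTerm.lsum z t,
    fun A A' _ _ c c' hc hc' hl z hz => ?_⟩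
  have hzmem : z ∈ Metric.closedBall (0 : J → ℂ) (max C 0) := by
    rw [mem_closedBall_zero_iff, pi_norm_le_iff_of_nonneg (le_max_right _ _)]
    exact fun j => (hz j).trans (le_max_left _ _)
  obtain ⟨y, hy, hyz⟩ := Set.mem_iUnion₂.1 (hZ hzmem)
  have hzy : ∀ j, ‖z j - y j‖ ≤ η := fun j =>
    (norm_le_pi_norm (z - y) j).trans (mem_ball_iff_norm.1 hyz).le
  have hl' := hl (CTerm.lsum y t) (List.mem_map.2 ⟨y, by simpa using hy, rfl⟩)
  rw [CTerm.eval_lsum, CTerm.eval_lsum] at hl'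
  have hdiff : ∀ (E : Type) [CStarAlgebra E] (e : Fin N → E), (∀ i, ‖e i‖ ≤ 1) →
      ‖∑ j, z j • (t j).eval e - ∑ j, y j • (t j).eval e‖ ≤ δ / 4 := by
    intro E _ e he
    refine le_trans ?_ hηle
    rw [← Finset.sum_sub_distrib, ← nsmul_eq_mul, ← Finset.card_univ]
    refine (norm_sum_le _ _).trans (Finset.sum_le_card_nsmul _ _ _ fun j _ => ?_)
    rw [← sub_smul, norm_smul]
    exact mul_le_mul (hzy j) (hb E e he j) (norm_nonneg _) hη0.le
  have h1 := norm_le_norm_add_norm_sub' (∑ j, z j • (t j).eval c) (∑ j, y j • (t j).eval c)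
  have h2 := norm_le_norm_add_norm_sub (∑ j, z j • (t j).eval c') (∑ j, y j • (t j).eval c')
  have h3 := hdiff A c hc
  have h4 := hdiff A' c' hc'
  linarith

end Terms

/-! ### Comparing the norms of two algebras -/

section Compare
variable {n : ℕ}

lemma HasReps.norm_le {A : Type} [CStarAlgebra A] (hA : HasReps n A) {a : A} {E : ℝ} (hE : 0 ≤ E)
    (h : ∀ ρ : MatRep n A, ρ.IsExcisable → ∀ i j, ‖ρ a i j‖ ≤ E) : ‖a‖ ≤ (n : ℝ) ^ 2 * E := by
  by_cases ha : a = 0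
  · rw [ha, norm_zero]; positivity
  obtain ⟨ρ, hρ, he⟩ := hA a ha
  rw [← he]
  refine (MatRep.norm_le_sum_entries _).trans ?_
  refine (Finset.sum_le_sum fun i _ => Finset.sum_le_sum fun j _ => h ρ hρ i j).trans ?_
  simp [sq, mul_assoc]

lemma MatRep.kron_sum_entry {A B J : Type} [CStarAlgebra A] [CStarAlgebra B] [Fintype J]
    (ρ : MatRep n A) (σ : MatRep n B) (α : J → A) (β : J → B) (i j k l : Fin n) :
    MatRep.kron ρ σ (∑ q, α q ⊗ₜ[ℂ] β q) (i, k) (j, l) = ∑ q, ρ (α q) i j * σ (β q) k l := by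
  simp [map_sum, Matrix.sum_apply]

/-- If all bounded combinations of the `α j`, and of the `β j`, have almost the same norms in
`A` and in `A'`, then the norms of `∑ α j ⊗ β j` in the two tensor squares are comparable, up
to a constant: compare first the left and then the right tensor factor. -/
lemma repNorm_le_of_combinations {A A' J : Type} [CStarAlgebra A] [CStarAlgebra A'] [Fintype J]
    (hA' : HasReps n A') {α β : J → A} {α' β' : J → A'} {C δ : ℝ} (hδ : 0 ≤ δ)
    (hβ : ∀ j, ‖β j‖ ≤ C) (hα' : ∀ j, ‖α' j‖ ≤ C)
    (h1 : ∀ z : J → ℂ, (∀ j, ‖z j‖ ≤ C) → ‖∑ j, z j • α j‖ ≤ ‖∑ j, z j • α' j‖ + δ)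
    (h2 : ∀ z : J → ℂ, (∀ j, ‖z j‖ ≤ C) → ‖∑ j, z j • β j‖ ≤ ‖∑ j, z j • β' j‖ + δ) :
    repNorm n A (∑ j, α j ⊗ₜ[ℂ] β j) ≤
      (n : ℝ) ^ 8 * repNorm n A' (∑ j, α' j ⊗ₜ[ℂ] β' j) + (n : ℝ) ^ 4 * ((n : ℝ) ^ 2 + 1) * δ := by
  set R := repNorm n A' (∑ j, α' j ⊗ₜ[ℂ] β' j) with hR
  have hR0 : 0 ≤ R := repNorm_nonneg _
  refine repNorm_le (by positivity) fun ⟨(ρ, σ), hρ, hσ⟩ => ?_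
  have hent : ∀ i j k l, ‖MatRep.kron ρ σ (∑ j, α j ⊗ₜ[ℂ] β j) (i, k) (j, l)‖
      ≤ (n : ℝ) ^ 2 * ((n : ℝ) ^ 2 * R + δ) + δ := by
    intro i j k l
    have e1 : MatRep.kron ρ σ (∑ j, α j ⊗ₜ[ℂ] β j) (i, k) (j, l)
        = ρ (∑ q, σ (β q) k l • α q) i j := by
      rw [MatRep.kron_sum_entry]
      simp [map_sum, Matrix.sum_apply, mul_comm]
    rw [e1]
    refine (MatRep.norm_coeff_le _ _ _ _).trans ((h1 _ fun q =>
      (MatRep.norm_coeff_le _ _ _ _).trans (hβ q)).trans (add_le_add_left ?_ δ))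
    refine hA'.norm_le (by positivity) fun ρ' hρ' i' j' => ?_
    have e2 : ρ' (∑ q, σ (β q) k l • α' q) i' j' = σ (∑ q, ρ' (α' q) i' j' • β q) k l := by
      simp [map_sum, Matrix.sum_apply, mul_comm]
    rw [e2]
    refine (MatRep.norm_coeff_le _ _ _ _).trans ((h2 _ fun q =>
      (MatRep.norm_coeff_le _ _ _ _).trans (hα' q)).trans (add_le_add_left ?_ δ))
    refine hA'.norm_le hR0 fun σ' hσ' k' l' => ?_
    have e3 : σ' (∑ q, ρ' (α' q) i' j' • β' q) k' l'
        = MatRep.kron ρ' σ' (∑ j, α' j ⊗ₜ[ℂ] β' j) (i', k') (j', l') := by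
      rw [MatRep.kron_sum_entry]
      simp [map_sum, Matrix.sum_apply]
    rw [e3]
    exact (MatRep.norm_entry_le _ _ _).trans (le_repNorm ⟨(ρ', σ'), hρ', hσ'⟩ _)
  refine (MatRep.norm_le_sum_entries _).trans ?_
  refine (Finset.sum_le_sum fun i _ => Finset.sum_le_sum fun j _ =>
    hent i.1 j.1 i.2 j.2).trans (le_of_eq ?_)
  simp only [Finset.sum_const, Finset.card_univ, Fintype.card_prod, Fintype.card_fin,
    nsmul_eq_mul, Nat.cast_mul]
  ring

lemma repNorm_sum_tmul_le {A : Type} [CStarAlgebra A] (hA : HasReps n A) {m : ℕ}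
    {a b : Fin m → A} (ha : ∀ k, ‖a k‖ ≤ 1) (hb : ∀ k, ‖b k‖ ≤ 1) :
    repNorm n A (∑ k, a k ⊗ₜ[ℂ] b k) ≤ m := by
  refine (hA.isCStarNorm.sum_le _ _).trans ?_
  refine (Finset.sum_le_card_nsmul _ _ 1 fun k _ => ?_).trans (by simp)
  exact (hA.isCStarNorm.tmul_le _ _).trans (mul_le_one₀ (ha k) (norm_nonneg _) (hb k))

lemma norm_append_le {A : Type} [CStarAlgebra A] {m : ℕ}
    {a b : Fin m → A} (ha : ∀ k, ‖a k‖ ≤ 1) (hb : ∀ k, ‖b k‖ ≤ 1) (i : Fin (m + m)) :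
    ‖Fin.append a b i‖ ≤ 1 := by
  induction i using Fin.addCases with
  | left i => simpa using ha i
  | right i => rw [Fin.append_right]; exact hb i

/-- The norm of `∑ aₖ ⊗ bₖ` is determined, up to `ε`, by the approximate norms of finitely many
terms. A high iterate of `x ↦ x* x` makes the constant of `repNorm_le_of_combinations`
negligible. -/
lemma exists_terms_repNorm (n m : ℕ) {ε : ℝ} (hε : 0 < ε) :
    ∃ (l : List (CTerm (m + m))) (δ : ℝ), 0 < δ ∧
      ∀ (A A' : Type) [CStarAlgebra A] [CStarAlgebra A'], HasReps n A → HasReps n A' →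
        ∀ (a b : Fin m → A) (a' b' : Fin m → A'),
        (∀ k, ‖a k‖ ≤ 1) → (∀ k, ‖b k‖ ≤ 1) → (∀ k, ‖a' k‖ ≤ 1) → (∀ k, ‖b' k‖ ≤ 1) →
        (∀ p ∈ l, ‖p.eval (Fin.append a b)‖ ≤ ‖p.eval (Fin.append a' b')‖ + δ) →
        repNorm n A (∑ k, a k ⊗ₜ[ℂ] b k) ≤ repNorm n A' (∑ k, a' k ⊗ₜ[ℂ] b' k) + ε := by
  set q : ℝ := 1 + ε / (m + 1) with hq
  have hq1 : 1 < q := by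
    have : 0 < ε / (m + 1 : ℝ) := by positivity
    linarith
  obtain ⟨k, hk⟩ := pow_unbounded_of_one_lt (2 * (n : ℝ) ^ 8) hq1
  have hk' : 2 * (n : ℝ) ^ 8 < q ^ (2 ^ k) :=
    hk.trans_le (pow_le_pow_right₀ hq1.le (Nat.lt_two_pow_self (n := k)).le)
  obtain ⟨J, _, t, s, hts⟩ := exists_terms_iterate_starSq m k
  obtain ⟨C, hC, hCt⟩ := CTerm.exists_bound_family t
  obtain ⟨D, hD, hDs⟩ := CTerm.exists_bound_family s
  set L : ℝ := (n : ℝ) ^ 4 * ((n : ℝ) ^ 2 + 1) with hL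
  have hL0 : 0 ≤ L := by positivity
  set δ : ℝ := ε ^ (2 ^ k) / (4 * (L + 1)) with hδ
  have hδ0 : 0 < δ := by positivity
  have hLδ : 2 * (L * δ) < ε ^ (2 ^ k) := by
    have h1 : δ * (4 * (L + 1)) = ε ^ (2 ^ k) := div_mul_cancel₀ _ (by positivity)
    nlinarith [mul_nonneg hL0 hδ0.le]
  obtain ⟨l₁, hl₁⟩ := exists_terms_combination t (max C D) hδ0
  obtain ⟨l₂, hl₂⟩ := exists_terms_combination s (max C D) hδ0
  refine ⟨l₁ ++ l₂, δ / 2, by positivity,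
    fun A A' _ _ hA hA' a b a' b' ha hb ha' hb' hl => ?_⟩
  have hc := norm_append_le ha hb
  have hc' := norm_append_le ha' hb'
  have hcomp := repNorm_le_of_combinations hA' (C := max C D) hδ0.le
    (fun j => (hDs A _ hc j).trans (le_max_right _ _))
    (fun j => (hCt A' _ hc' j).trans (le_max_left _ _))
    (hl₁ A A' _ _ hc hc' fun p hp => hl p (List.mem_append_left _ hp))
    (hl₂ A A' _ _ hc hc' fun p hp => hl p (List.mem_append_right _ hp))
  rw [← hts, ← hts, iterate_starSq repNorm_cstar, iterate_starSq repNorm_cstar] at hcomp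
  set P := repNorm n A (∑ k, a k ⊗ₜ[ℂ] b k)
  set P' := repNorm n A' (∑ k, a' k ⊗ₜ[ℂ] b' k)
  have hP' : P' ≤ m := repNorm_sum_tmul_le hA' ha' hb'
  have hP'0 : 0 ≤ P' := repNorm_nonneg _
  by_contra! hlt
  have h1 : P' * q ≤ P := by
    have : P' * (ε / (m + 1)) ≤ ε := by
      rw [mul_div_assoc', div_le_iff₀ (by positivity)]
      nlinarith
    rw [hq, mul_add, mul_one]
    linarith
  have h2 : P' ^ (2 ^ k) * q ^ (2 ^ k) ≤ P ^ (2 ^ k) := by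
    rw [← mul_pow]
    exact pow_le_pow_left₀ (by positivity) h1 _
  have h3 : ε ^ (2 ^ k) ≤ P ^ (2 ^ k) := pow_le_pow_left₀ hε.le (by linarith) _
  have h4 : P' ^ (2 ^ k) * (2 * (n : ℝ) ^ 8) ≤ P' ^ (2 ^ k) * q ^ (2 ^ k) :=
    mul_le_mul_of_nonneg_left hk'.le (by positivity)
  linarith

end Compare

/-! ### Definability -/

section Definable

/-- A function that is almost controlled by finitely many term norms is almost a continuous
function of them: take the infimal convolution of its values with a multiple of the distance. -/
lemma exists_continuous_approx {r : ℕ} (S : Set ((Fin r → ℝ) × ℝ)) {M δ ε : ℝ}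
    (hδ : 0 < δ) (hε : 0 < ε) (hS : ∀ s ∈ S, 0 ≤ s.2 ∧ s.2 ≤ M)
    (h : ∀ s ∈ S, ∀ s' ∈ S, (∀ j, s.1 j ≤ s'.1 j + δ) → s.2 ≤ s'.2 + ε) :
    ∃ u : (Fin r → ℝ) → ℝ, Continuous u ∧ ∀ s ∈ S, |s.2 - u s.1| ≤ ε := by
  rcases S.eq_empty_or_nonempty with rfl | hne
  · exact ⟨0, continuous_zero, by simp⟩
  have _ : Nonempty S := hne.to_subtype
  have hM : 0 ≤ M := by
    obtain ⟨s, hs⟩ := hne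
    exact (hS s hs).1.trans (hS s hs).2
  set L : ℝ := M / δ with hL
  have hL0 : 0 ≤ L := by positivity
  have hbdd : ∀ v : Fin r → ℝ, BddBelow (Set.range fun s : S => s.1.2 + L * dist v s.1.1) := by
    intro v
    refine ⟨0, ?_⟩
    rintro _ ⟨s, rfl⟩
    exact add_nonneg (hS s s.2).1 (mul_nonneg hL0 dist_nonneg)
  refine ⟨fun v => ⨅ s : S, (s.1.2 + L * dist v s.1.1), ?_, fun s hs => ?_⟩
  · refine (LipschitzWith.of_le_add_mul L.toNNReal fun v w => ?_).continuous
    rw [← sub_le_iff_le_add]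
    refine le_ciInf fun s => ?_
    rw [sub_le_iff_le_add]
    refine (ciInf_le (hbdd v) s).trans ?_
    have h1 : dist v s.1.1 ≤ dist v w + dist w s.1.1 := dist_triangle _ _ _
    have h2 := mul_le_mul_of_nonneg_left h1 hL0
    rw [Real.coe_toNNReal L hL0]
    linarith
  · have h1 : (⨅ t : S, (t.1.2 + L * dist s.1 t.1.1)) ≤ s.2 := by
      refine (ciInf_le (hbdd s.1) ⟨s, hs⟩).trans (by simp)
    have h2 : s.2 - ε ≤ ⨅ t : S, (t.1.2 + L * dist s.1 t.1.1) := by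
      refine le_ciInf fun ⟨t, ht⟩ => ?_
      by_cases hd : dist s.1 t.1 ≤ δ
      · have h3 := h s hs t ht fun j => by
          have h4 := (dist_le_pi_dist s.1 t.1 j).trans hd
          rw [Real.dist_eq] at h4
          linarith [le_abs_self (s.1 j - t.1 j)]
        have : 0 ≤ L * dist s.1 t.1 := mul_nonneg hL0 dist_nonneg
        linarith
      · have h3 : L * δ = M := div_mul_cancel₀ _ hδ.ne'
        have h4 := mul_le_mul_of_nonneg_left (not_le.1 hd).le hL0
        have h5 := (hS s hs).2
        have h6 := (hS t ht).1
        simp only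
        linarith
    rw [abs_le]
    constructor <;> linarith

/-- The norm on the tensor square is uniformly approximated by continuous functions of the norms
of finitely many terms. -/
lemma exists_repNorm_approx (n m : ℕ) {ε : ℝ} (hε : 0 < ε) :
    ∃ (r : ℕ) (p : Fin r → CTerm (m + m)) (u : (Fin r → ℝ) → ℝ), Continuous u ∧
      ∀ (A : Type) [CStarAlgebra A], HasReps n A → ∀ a b : Fin m → A,
        (∀ k, ‖a k‖ ≤ 1) → (∀ k, ‖b k‖ ≤ 1) →
        |repNorm n A (∑ k, a k ⊗ₜ[ℂ] b k) - u fun j => ‖(p j).eval (Fin.append a b)‖| ≤ ε := by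
  obtain ⟨l, δ, hδ, hl⟩ := exists_terms_repNorm n m hε
  obtain ⟨u, hu, hu'⟩ := exists_continuous_approx (r := l.length)
    {s | ∃ (A : Type) (_ : CStarAlgebra A) (a b : Fin m → A), HasReps n A ∧ (∀ k, ‖a k‖ ≤ 1) ∧
      (∀ k, ‖b k‖ ≤ 1) ∧
      s = (fun j => ‖(l.get j).eval (Fin.append a b)‖, repNorm n A (∑ k, a k ⊗ₜ[ℂ] b k))}
    (M := m) hδ hε
    (by
      rintro _ ⟨A, _, a, b, hA, ha, hb, rfl⟩
      exact ⟨repNorm_nonneg _, repNorm_sum_tmul_le hA ha hb⟩)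
    (by
      rintro _ ⟨A, _, a, b, hA, ha, hb, rfl⟩ _ ⟨A', _, a', b', hA', ha', hb', rfl⟩ h
      refine hl A A' hA hA' a b a' b' ha hb ha' hb' fun p hp => ?_
      obtain ⟨j, rfl⟩ := List.get_of_mem hp
      exact h j)
  exact ⟨l.length, l.get, u, hu, fun A _ hA a b ha hb => hu' _ ⟨A, _, a, b, hA, ha, hb, rfl⟩⟩

variable {I : Type} {U : Ultrafilter I} {A : I → Type} [∀ i, CStarAlgebra (A i)]
  {B : Type} [CStarAlgebra B] {π : (∀ i, A i) → B}

/-- Terms are evaluated coordinatewise in an ultraproduct. -/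
lemma IsCStarUltraproduct.eval_eq (hB : IsCStarUltraproduct U A B π) {N : ℕ} (t : CTerm N)
    (c : Fin N → ∀ i, A i) (hc : ∀ k, Bdd (c k)) :
    Bdd (fun i => t.eval fun k => c k i) ∧
      π (fun i => t.eval fun k => c k i) = t.eval fun k => π (c k) := by
  induction t with
  | var k =>
    simp only [CTerm.eval]
    exact ⟨hc k, trivial⟩
  | one =>
    simp only [CTerm.eval]
    exact ⟨bdd_one, hB.map_one⟩
  | add s t hs ht =>
    obtain ⟨hs, hs'⟩ := hs
    obtain ⟨ht, ht'⟩ := ht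
    simp only [CTerm.eval]
    exact ⟨hs.add ht, by rw [← hs', ← ht', ← hB.map_add _ _ hs ht]; rfl⟩
  | mul s t hs ht =>
    obtain ⟨hs, hs'⟩ := hs
    obtain ⟨ht, ht'⟩ := ht
    simp only [CTerm.eval]
    exact ⟨hs.mul ht, by rw [← hs', ← ht', ← hB.map_mul _ _ hs ht]; rfl⟩
  | star t ht =>
    obtain ⟨ht, ht'⟩ := ht
    simp only [CTerm.eval]
    exact ⟨ht.star, by rw [← ht', ← hB.map_star _ ht]; rfl⟩
  | smul z t ht =>
    obtain ⟨ht, ht'⟩ := ht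
    simp only [CTerm.eval]
    exact ⟨ht.smul z, by rw [← ht', ← hB.map_smul _ _ ht]; rfl⟩

lemma IsCStarUltraproduct.tendsto_norm_eval (hB : IsCStarUltraproduct U A B π) {m : ℕ}
    (t : CTerm (m + m)) (f g : Fin m → ∀ i, A i) (hf : ∀ k, Bdd (f k)) (hg : ∀ k, Bdd (g k)) :
    Tendsto (fun i => ‖t.eval (Fin.append (fun k => f k i) (fun k => g k i))‖) (U : Filter I)
      (𝓝 ‖t.eval (Fin.append (fun k => π (f k)) (fun k => π (g k)))‖) := by
  have hc : ∀ k, Bdd (Fin.append f g k) := by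
    intro k
    induction k using Fin.addCases with
    | left k => rw [Fin.append_left]; exact hf k
    | right k => rw [Fin.append_right]; exact hg k
  have e : ∀ {X : Type} (F : (∀ i, A i) → X), Fin.append (fun k => F (f k)) (fun k => F (g k))
      = fun k => F (Fin.append f g k) := by
    intro X F
    funext k
    induction k using Fin.addCases with
    | left k => simp only [Fin.append_left]
    | right k => simp only [Fin.append_right]
  obtain ⟨h1, h2⟩ := hB.eval_eq t _ hc
  rw [e π, ← h2]
  refine (hB.norm_eq _ h1).congr fun i => ?_
  rw [e fun x => x i]

lemma IsCStarUltraproduct.tendsto_repNorm {n : ℕ} (hB : IsCStarUltraproduct U A B π)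
    (hA : ∀ i, HasReps n (A i)) {m : ℕ} (f g : Fin m → ∀ i, A i)
    (hf : ∀ k i, ‖f k i‖ ≤ 1) (hg : ∀ k i, ‖g k i‖ ≤ 1) :
    Tendsto (fun i => repNorm n (A i) (∑ k, f k i ⊗ₜ[ℂ] g k i)) (U : Filter I)
      (𝓝 (repNorm n B (∑ k, π (f k) ⊗ₜ[ℂ] π (g k)))) := by
  have hfb : ∀ k, Bdd (f k) := fun k => ⟨1, hf k⟩
  have hgb : ∀ k, Bdd (g k) := fun k => ⟨1, hg k⟩
  rw [Metric.tendsto_nhds]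
  intro ε hε
  obtain ⟨r, p, u, hu, h⟩ := exists_repNorm_approx n m (ε := ε / 3) (by positivity)
  have hlim : Tendsto
      (fun i => u fun j => ‖(p j).eval (Fin.append (fun k => f k i) (fun k => g k i))‖)
      (U : Filter I)
      (𝓝 (u fun j => ‖(p j).eval (Fin.append (fun k => π (f k)) (fun k => π (g k)))‖)) :=
    (hu.tendsto _).comp
      (tendsto_pi_nhds.2 fun j => hB.tendsto_norm_eval (p j) f g hfb hgb)
  have h1 := h B (hB.hasReps hA) (fun k => π (f k)) (fun k => π (g k))
    (fun k => le_of_tendsto' (hB.norm_eq _ (hfb k)) (hf k))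
    (fun k => le_of_tendsto' (hB.norm_eq _ (hgb k)) (hg k))
  filter_upwards [Metric.tendsto_nhds.1 hlim (ε / 3) (by positivity)] with i hi
  have h2 := h (A i) (hA i) (fun k => f k i) (fun k => g k i) (fun k => hf k i) fun k => hg k i
  rw [Real.dist_eq] at hi ⊢
  rw [abs_le] at h1 h2
  rw [abs_lt] at hi ⊢
  constructor <;> linarith [h1.1, h1.2, h2.1, h2.2, hi.1, hi.2]

end Definable

/-- Let `T` be the theory of `n`-subhomogeneous C*-algebras.  Then the
minimal tensor norm predicate `P^min` is `T`-definable; that is (and in particular), for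
all families `(A i)` of `n`-subhomogeneous C*-algebras, all ultrafilters `U`, and all
`m ≥ 1`, `P^min_{∏_U A_i, m} = lim_U P^min_{A_i, m}`. -/
theorem minNorm_definable_over_subhomogeneous (n : ℕ) (hn : 1 ≤ n) :
    (∀ (m : ℕ) (ε : ℝ), 0 < ε → ∃ phi : Formula (m + m),
      ∀ (A : Type) [CStarAlgebra A], IsSubhomogeneous n A →
        ∀ a b : Fin m → A, (∀ k, ‖a k‖ ≤ 1) → (∀ k, ‖b k‖ ≤ 1) →
          |minNorm A A (∑ k, a k ⊗ₜ[ℂ] b k) - phi.interp A (Fin.append a b)| ≤ ε) ∧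
    (∀ (I : Type) (U : Ultrafilter I) (A : I → Type) [∀ i, CStarAlgebra (A i)],
      (∀ i, IsSubhomogeneous n (A i)) →
      ∀ (B : Type) [CStarAlgebra B] (π : (∀ i, A i) → B), IsCStarUltraproduct U A B π →
      ∀ (m : ℕ) (f g : Fin m → ∀ i, A i),
        (∀ k i, ‖f k i‖ ≤ 1) → (∀ k i, ‖g k i‖ ≤ 1) →
        Tendsto (fun i => minNorm (A i) (A i) (∑ k, f k i ⊗ₜ[ℂ] g k i)) (U : Filter I)
          (nhds (minNorm B B (∑ k, π (f k) ⊗ₜ[ℂ] π (g k))))) := by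
  constructor
  · intro m ε hε
    obtain ⟨r, p, u, hu, h⟩ := exists_repNorm_approx n m hε
    refine ⟨Formula.comb u hu fun j => Formula.atom (p j), fun A _ hA a b ha hb => ?_⟩
    rw [hA.hasReps.minNorm_eq]
    simpa only [Formula.interp] using h A hA.hasReps a b ha hb
  · intro I U A _ hA B _ π hB m f g hf hg
    have hA' := fun i => (hA i).hasReps
    rw [(hB.hasReps hA').minNorm_eq]
    exact (hB.tendsto_repNorm hA' f g hf hg).congr fun i => ((hA' i).minNorm_eq _).symm

end
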